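/- Under Conditions (A)–(D) with b_j ≠ 0 for all j ≥ 1, let u₀ be any H-valued random variable, independent of {η_k}, whose law is supported by 𝒜, and let ζ_k = k⁻¹ Σ_{n=0}^{k−1} δ_{u_n} be the occupation measures of the trajectory u_k = S(u_{k−1}) + η_k. Then the family {ζ_k, k ≥ 1} of random probability measures on 𝒜 satisfies the large deviation principle with the good rate function I(σ) = sup_{V ∈ C(𝒜)} (⟨V,σ⟩ − Q(V)), σ ∈ 𝒫(𝒜), where Q(V) := lim_{k→∞} k⁻¹ log 𝔼 exp(Σ_{n=1}^k V(u_n)) exists, does not depend on u₀, and is a 1-Lipschitz convex function on C(𝒜) satisfying Q(C) = C for every constant C ∈ ℝ. -/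

import Mathlib

open MeasureTheory ProbabilityTheory Filter Topology BoundedContinuousFunction
open scoped ENNReal NNReal Pointwise

noncomputable section

/-- The sets `𝒜_k(B)`: `𝒜_0(B) = B`, `𝒜_k(B) = S(𝒜_{k-1}(B)) + 𝒦`. -/
def attain {H : Type*} [AddCommGroup H] (S : H → H) (K : Set H) (B : Set H) : ℕ → Set H
  | 0 => B
  | n + 1 => S '' attain S K B n + K

/-- The domain of attainability `𝒜(B)` from `B`: the closure of `⋃_k 𝒜_k(B)`. -/
def attainDom {H : Type*} [AddCommGroup H] [TopologicalSpace H]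
    (S : H → H) (K : Set H) (B : Set H) : Set H :=
  closure (⋃ n, attain S K B n)

variable {H : Type} [NormedAddCommGroup H] [InnerProductSpace ℝ H] [CompleteSpace H]

/-- The orthogonal projection `𝖯_N` onto the span of the first `N` vectors of an orthonormal
basis. -/
def projB (e : HilbertBasis ℕ ℝ H) (N : ℕ) (u : H) : H :=
  ∑ j ∈ Finset.range N, e.repr u j • (e j : H)

/-- Condition (A): regularity and stability. -/
def CondA (S : H → H) : Prop :=
  ContDiff ℝ 1 S ∧
  ∀ R r : ℝ, 0 < r → r < R →
    ∃ C : ℝ, 0 < C ∧ ∃ a : ℝ, 0 < a ∧ a < 1 ∧ ∃ n₀ : ℕ, 1 ≤ n₀ ∧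
      (∀ u₁ ∈ Metric.closedBall (0 : H) R, ∀ u₂ ∈ Metric.closedBall (0 : H) R,
          ‖S u₁ - S u₂‖ ≤ C * ‖u₁ - u₂‖) ∧
      ∀ u ∈ Metric.closedBall (0 : H) R, ∀ n : ℕ, n₀ ≤ n →
          ‖S^[n] u‖ ≤ max (a * ‖u‖) r

/-- Condition (B): dissipativity. -/
def CondB (S : H → H) (K : Set H) : Prop :=
  ∃ ρ : ℝ, 0 < ρ ∧ ∃ k₀ : ℝ → ℕ, Monotone k₀ ∧
    ∀ R : ℝ, 0 ≤ R → ∀ k : ℕ, k₀ R ≤ k →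
      attain S K (Metric.closedBall 0 R) k ⊆ Metric.closedBall (0 : H) ρ

/-- Condition (C): squeezing. -/
def CondC (S : H → H) (e : HilbertBasis ℕ ℝ H) : Prop :=
  ∀ R : ℝ, 0 < R → ∃ γ : ℕ → ℝ, (∀ N, 0 < γ N) ∧ Antitone γ ∧
    Tendsto γ atTop (𝓝 0) ∧
    ∀ N : ℕ, ∀ u₁ ∈ Metric.closedBall (0 : H) R, ∀ u₂ ∈ Metric.closedBall (0 : H) R,
      ‖(S u₁ - S u₂) - projB e N (S u₁ - S u₂)‖ ≤ γ N * ‖u₁ - u₂‖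

/-- Condition (D): structure of the noise, `η_k = ∑_j b_j ξ_{jk} e_j` with `∑ b_j² < ∞`,
independent scalar `ξ_{jk}` whose laws have Lipschitz densities `p_j` with `p_j(0) > 0` and
support in `[-1,1]`. -/
def CondD [MeasurableSpace H] {Ω : Type*} [MeasurableSpace Ω] (P : Measure Ω)
    (e : HilbertBasis ℕ ℝ H) (η : ℕ → Ω → H)
    (b : ℕ → ℝ) (ξ : ℕ → ℕ → Ω → ℝ) (p : ℕ → ℝ → ℝ) : Prop :=
  (∀ j, 0 ≤ b j) ∧ Summable (fun j => (b j) ^ 2) ∧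
  (∀ k ω, HasSum (fun j => (b j * ξ j k ω) • (e j : H)) (η k ω)) ∧
  (∀ j k, Measurable (ξ j k)) ∧
  iIndepFun (fun jk : ℕ × ℕ => ξ jk.1 jk.2) P ∧
  (∀ j k, Measure.map (ξ j k) P
      = (volume : Measure ℝ).withDensity fun x => ENNReal.ofReal (p j x)) ∧
  (∀ j, ∃ L : ℝ≥0, LipschitzWith L (p j)) ∧
  (∀ j, 0 < p j 0) ∧
  (∀ j, Function.support (p j) ⊆ Set.Icc (-1 : ℝ) 1)

/-- The trajectory `u_k = S(u_{k-1}) + η_k` of the random dynamical system issued from `u₀`. -/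
def traj {Ω : Type*} (S : H → H) (η : ℕ → Ω → H) (u₀ : Ω → H) : ℕ → Ω → H
  | 0 => u₀
  | k + 1 => fun ω => S (traj S η u₀ k ω) + η (k + 1) ω

/-- The (topological) support of a measure. -/
def msupp {X : Type*} [TopologicalSpace X] [MeasurableSpace X] (μ : Measure X) : Set X :=
  {x | ∀ U ∈ 𝓝 x, 0 < μ U}

/-- The occupation measures `ζ_k = k⁻¹ ∑_{n=0}^{k-1} δ_{x_n}` of a sequence. -/
def occ {X : Type*} [MeasurableSpace X] (x : ℕ → X) (k : ℕ) : ProbabilityMeasure X :=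
  if hk : k = 0 then ⟨Measure.dirac (x 0), Measure.dirac.isProbabilityMeasure⟩
  else
    ⟨(k : ℝ≥0∞)⁻¹ • ∑ n ∈ Finset.range k, Measure.dirac (x n), by
      refine ⟨?_⟩
      simp only [Measure.smul_apply, Measure.finset_sum_apply, measure_univ,
        Finset.sum_const, Finset.card_range, nsmul_eq_mul, mul_one, smul_eq_mul]
      exact ENNReal.inv_mul_cancel (Nat.cast_ne_zero.mpr hk) (ENNReal.natCast_ne_top k)⟩

/-- Large deviation principle for the sequence of events `prob k` (the laws of random
probability measures in `Z`), with rate function `I`. -/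
def LDPof {Z : Type*} [TopologicalSpace Z] (prob : ℕ → Set Z → ℝ≥0∞) (I : Z → ℝ≥0∞) : Prop :=
  (∀ F : Set Z, IsClosed F →
    Filter.limsup (fun k : ℕ => (((k : ℝ)⁻¹ : ℝ) : EReal) * ENNReal.log (prob k F)) atTop
      ≤ -(⨅ σ ∈ F, (I σ : EReal))) ∧
  (∀ G : Set Z, IsOpen G →
    -(⨅ σ ∈ G, (I σ : EReal))
      ≤ Filter.liminf (fun k : ℕ => (((k : ℝ)⁻¹ : ℝ) : EReal) * ENNReal.log (prob k G)) atTop)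

/-- A good rate function: lower semicontinuous with compact level sets. -/
def GoodRate {Z : Type*} [TopologicalSpace Z] (I : Z → ℝ≥0∞) : Prop :=
  LowerSemicontinuous I ∧ ∀ c : ℝ≥0∞, c ≠ ⊤ → IsCompact {σ : Z | I σ ≤ c}

set_option linter.unusedSectionVars false


section Core

def ex (x : ℝ) : ℝ≥0∞ := ENNReal.ofReal (Real.exp x)

lemma ex_add (x y : ℝ) : ex (x + y) = ex x * ex y := by
  unfold ex; rw [Real.exp_add, ENNReal.ofReal_mul (Real.exp_nonneg _)]
lemma ex_zero : ex 0 = 1 := by simp [ex]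
lemma ex_ne_top (x : ℝ) : ex x ≠ ⊤ := ENNReal.ofReal_ne_top
lemma ex_pos (x : ℝ) : 0 < ex x := by simp [ex, Real.exp_pos]
lemma ex_ne_zero (x : ℝ) : ex x ≠ 0 := (ex_pos x).ne'
lemma ex_mono {x y : ℝ} (h : x ≤ y) : ex x ≤ ex y :=
  ENNReal.ofReal_le_ofReal (Real.exp_le_exp.2 h)
lemma ex_le_iff {x y : ℝ} : ex x ≤ ex y ↔ x ≤ y := by
  unfold ex; rw [ENNReal.ofReal_le_ofReal_iff (Real.exp_nonneg _), Real.exp_le_exp]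
lemma ex_neg_mul (x : ℝ) : ex (-x) * ex x = 1 := by rw [← ex_add]; simp [ex_zero]
lemma ex_mul_neg (x : ℝ) : ex x * ex (-x) = 1 := by rw [← ex_add]; simp [ex_zero]
lemma ex_mul_le_iff {x : ℝ} {a b : ℝ≥0∞} : ex x * a ≤ b ↔ a ≤ ex (-x) * b := by
  constructor
  · intro h
    calc a = ex (-x) * (ex x * a) := by rw [← mul_assoc, ex_neg_mul, one_mul]
      _ ≤ _ := by gcongr
  · intro h
    calc ex x * a ≤ ex x * (ex (-x) * b) := by gcongr
      _ = b := by rw [← mul_assoc, ex_mul_neg, one_mul]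
lemma ex_nat_mul (k : ℕ) (x : ℝ) : ex (k * x) = ex x ^ k := by
  unfold ex; rw [Real.exp_nat_mul, ENNReal.ofReal_pow (Real.exp_nonneg _)]

variable {H : Type} [NormedAddCommGroup H] [MeasurableSpace H] [BorelSpace H]
  [SecondCountableTopology H]
  {E : Type} [NormedAddCommGroup E] [MeasurableSpace E] [BorelSpace E]
  [SecondCountableTopology E]

def TT (S : H → H) (μ : Measure H) (V : H → E) (g : H × E → ℝ≥0∞) (z : H × E) : ℝ≥0∞ :=
  ∫⁻ y, g (S z.1 + y, z.2 + V (S z.1 + y)) ∂μ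

def Pop (S : H → H) (μ : Measure H) (g : H → ℝ≥0∞) (u : H) : ℝ≥0∞ :=
  ∫⁻ y, g (S u + y) ∂μ

structure Sys (S : H → H) (μ : Measure H) (A K : Set H) : Prop where
  contS : Continuous S
  measK : MeasurableSet K
  aeK : ∀ᵐ y ∂μ, y ∈ K
  inv : ∀ u ∈ A, ∀ y ∈ K, S u + y ∈ A
  comp : IsCompact A
  ne : A.Nonempty
  shift : ∀ γ : ℝ, 0 < γ → ∃ C : ℝ, 0 ≤ C ∧ ∀ u ∈ A, ∀ v ∈ A, ∃ w : H,
    ‖S u - S v - w‖ ≤ γ * ‖u - v‖ ∧ ∀ f : H → ℝ≥0∞, Measurable f → ∀ m : ℝ≥0∞, (∀ y, f y ≤ m) →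
      ∫⁻ y, f y ∂μ ≤ ∫⁻ y, f (y - w) ∂μ + m * ENNReal.ofReal (C * ‖u - v‖)
  irr : ∀ δ : ℝ, 0 < δ → ∀ v ∈ A, ∃ m : ℕ, ∃ p : ℝ≥0∞, 0 < p ∧ ∀ u ∈ A,
    p ≤ (Pop S μ)^[m] ((Metric.ball v δ).indicator 1) u

def LL (L : ℝ) (g : H × E → ℝ≥0∞) : Prop :=
  ∀ u s s', g (u, s) ≤ ex (L * ‖s - s'‖) * g (u, s')

variable {S : H → H} {μ : Measure H} [IsProbabilityMeasure μ] {A K : Set H} {V : H → E}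

lemma TT_meas (hS : Continuous S) (hV : Measurable V) {g : H × E → ℝ≥0∞} (hg : Measurable g) :
    Measurable (TT S μ V g) := by
  unfold TT
  have h : Measurable (fun q : (H × E) × H =>
      g (S q.1.1 + q.2, q.1.2 + V (S q.1.1 + q.2))) := by
    have := hS.measurable
    fun_prop
  exact h.lintegral_prod_right'

lemma TT_iter_meas (hS : Continuous S) (hV : Measurable V) {g : H × E → ℝ≥0∞}
    (hg : Measurable g) (k : ℕ) : Measurable ((TT S μ V)^[k] g) := by
  induction k with
  | zero => exact hg
  | succ k ih => rw [Function.iterate_succ_apply']; exact TT_meas hS hV ih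

lemma TT_LL {L : ℝ} {g : H × E → ℝ≥0∞} (hg : LL L g) : LL L (TT S μ V g) := by
  intro u s s'
  unfold TT
  rw [← lintegral_const_mul' _ _ (ex_ne_top _)]
  refine lintegral_mono fun y => ?_
  refine (hg _ _ (s' + V (S u + y))).trans ?_
  rw [add_sub_add_right_eq_sub]

lemma TT_iter_LL {L : ℝ} {g : H × E → ℝ≥0∞} (hg : LL L g) (k : ℕ) :
    LL L ((TT S μ V)^[k] g) := by
  induction k with
  | zero => exact hg
  | succ k ih => rw [Function.iterate_succ_apply']; exact TT_LL ih

/-- monotonicity on `A`, with a constant. -/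
lemma TT_mono (hs : Sys S μ A K) {c : ℝ≥0∞} (hc : c ≠ ⊤) {g g' : H × E → ℝ≥0∞}
    (h : ∀ u ∈ A, ∀ s, g (u, s) ≤ c * g' (u, s)) :
    ∀ u ∈ A, ∀ s, TT S μ V g (u, s) ≤ c * TT S μ V g' (u, s) := by
  intro u hu s
  unfold TT
  rw [← lintegral_const_mul' _ _ hc]
  refine lintegral_mono_ae ?_
  filter_upwards [hs.aeK] with y hy
  exact h _ (hs.inv u hu y hy) _

lemma TT_iter_mono (hs : Sys S μ A K) {c : ℝ≥0∞} (hc : c ≠ ⊤) {g g' : H × E → ℝ≥0∞}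
    (h : ∀ u ∈ A, ∀ s, g (u, s) ≤ c * g' (u, s)) (k : ℕ) :
    ∀ u ∈ A, ∀ s, (TT S μ V)^[k] g (u, s) ≤ c * (TT S μ V)^[k] g' (u, s) := by
  induction k with
  | zero => exact h
  | succ k ih => 
    simp only [Function.iterate_succ_apply']
    exact TT_mono hs hc ih

/-- one more final step costs at most `ex (L R)`. -/
lemma TT_snd_le {L R : ℝ} (hL : 0 ≤ L) (hR : ∀ x, ‖V x‖ ≤ R) {G : E → ℝ≥0∞}
    (hG : LL (H := H) L (fun z => G z.2)) (u : H) (s : E) :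
    TT S μ V (fun z => G z.2) (u, s) ≤ ex (L * R) * G s := by
  unfold TT
  calc _ ≤ ∫⁻ _, ex (L * R) * G s ∂μ := by
        refine lintegral_mono fun y => ?_
        refine (hG u _ s).trans ?_
        dsimp only
        gcongr
        refine ex_mono ?_
        have := hR (S u + y)
        gcongr
        simpa using this
    _ = _ := by simp

lemma le_TT_snd {L R : ℝ} (hL : 0 ≤ L) (hR : ∀ x, ‖V x‖ ≤ R) {G : E → ℝ≥0∞}
    (hG : LL (H := H) L (fun z => G z.2)) (u : H) (s : E) :
    G s ≤ ex (L * R) * TT S μ V (fun z => G z.2) (u, s) := by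
  unfold TT
  rw [← lintegral_const_mul' _ _ (ex_ne_top _)]
  calc G s = ∫⁻ _, G s ∂μ := by simp
    _ ≤ _ := by
        refine lintegral_mono fun y => ?_
        refine (hG u s (s + V (S u + y))).trans ?_
        dsimp only
        gcongr
        refine ex_mono ?_
        have := hR (S u + y)
        gcongr
        simpa using this

lemma TT_succ_le {L R : ℝ} (hs : Sys S μ A K) (hL : 0 ≤ L) (hR : ∀ x, ‖V x‖ ≤ R) {G : E → ℝ≥0∞}
    (hG : LL (H := H) L (fun z => G z.2)) (k m : ℕ) : ∀ u ∈ A, ∀ s : E,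
    (TT S μ V)^[k + m] (fun z => G z.2) (u, s)
      ≤ ex (m * (L * R)) * (TT S μ V)^[k] (fun z => G z.2) (u, s) := by
  induction m with
  | zero => intro u hu s; simp [ex_zero]
  | succ m ih =>
    intro u hu s
    rw [← add_assoc, Function.iterate_succ_apply]
    refine (TT_iter_mono hs (ex_ne_top (L * R)) (g' := fun z => G z.2)
      (fun u _ s => TT_snd_le hL hR hG u s) (k + m) u hu s).trans ?_
    push_cast
    rw [add_mul, one_mul, add_comm (_ * _), ex_add, mul_assoc]
    exact mul_le_mul_right (ih u hu s) _

lemma le_TT_succ {L R : ℝ} (hs : Sys S μ A K) (hL : 0 ≤ L) (hR : ∀ x, ‖V x‖ ≤ R) {G : E → ℝ≥0∞}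
    (hG : LL (H := H) L (fun z => G z.2)) (k : ℕ) : ∀ u ∈ A, ∀ s : E,
    (TT S μ V)^[k] (fun z => G z.2) (u, s)
      ≤ ex (L * R) * (TT S μ V)^[k + 1] (fun z => G z.2) (u, s) := by
  intro u hu s
  rw [Function.iterate_succ_apply]
  exact TT_iter_mono hs (ex_ne_top (L * R)) (fun u _ s => le_TT_snd hL hR hG u s) k u hu s

lemma equi {L R ε Λ : ℝ} (hs : Sys S μ A K) (hL : 0 ≤ L) (hR : ∀ x, ‖V x‖ ≤ R)
    (hVm : Measurable V) (hΛ : 0 ≤ Λ) (hε : 0 ≤ ε)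
    (hV : ∀ u ∈ A, ∀ v ∈ A, ‖V u - V v‖ ≤ ε + Λ * ‖u - v‖) :
    ∃ B : ℝ, 0 ≤ B ∧ ∀ G : E → ℝ≥0∞, Measurable G → LL (H := H) L (fun z => G z.2) → 
      ∀ k : ℕ, ∀ u ∈ A, ∀ v ∈ A, ∀ s : E,
      (TT S μ V)^[k] (fun z => G z.2) (u, s) ≤
        ex (L * Λ * ‖u - v‖ + L * ε * k) * (TT S μ V)^[k] (fun z => G z.2) (v, s)
        + ENNReal.ofReal (B * ‖u - v‖) *
          (ex (L * ‖s‖) * ⨆ x ∈ A, (TT S μ V)^[k] (fun z => G z.2) (x, 0)) := by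
  set γ : ℝ := min (1/2) (Real.exp (-(2 * (L * R))) / 2) with hγ
  have hγ0 : 0 < γ := by rw [hγ]; positivity
  have hγ1 : γ ≤ 1/2 := min_le_left _ _
  have hγ2 : γ * Real.exp (2 * (L * R)) ≤ 1/2 := by
    have : γ ≤ Real.exp (-(2 * (L * R))) / 2 := min_le_right _ _
    calc _ ≤ Real.exp (-(2 * (L * R))) / 2 * Real.exp (2 * (L * R)) := by gcongr
      _ = 1/2 := by rw [div_mul_eq_mul_div, ← Real.exp_add]; simp
  obtain ⟨C, hC0, hC⟩ := hs.shift γ hγ0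
  refine ⟨2 * C * Real.exp (2 * (L * R)), by positivity, ?_⟩
  set B := 2 * C * Real.exp (2 * (L * R)) with hB
  have hB0 : 0 ≤ B := by positivity
  intro G hGm hG k
  induction k with
  | zero =>
    intro u hu v hv s
    simp only [Function.iterate_zero, id]
    refine le_add_right ?_
    refine le_mul_of_one_le_left zero_le ?_
    rw [← ex_zero]; apply ex_mono; positivity
  | succ k ih =>
    intro u hu v hv s
    set g := (TT S μ V)^[k] (fun z => G z.2) with hg
    set M := ⨆ x ∈ A, g (x, 0) with hM
    have hgm : Measurable g := TT_iter_meas hs.contS hVm (hGm.comp measurable_snd) k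
    have hgL : LL L g := TT_iter_LL hG k
    obtain ⟨w, hw, hsh⟩ := hC u hu v hv
    have hM1 : M ≤ ex (L * R) * ⨆ x ∈ A, (TT S μ V)^[k+1] (fun z => G z.2) (x, 0) := by
      refine iSup₂_le fun x hx => ?_
      refine (le_TT_succ hs hL hR hG k x hx 0).trans ?_
      gcongr
      exact le_iSup₂ (f := fun x _ => (TT S μ V)^[k+1] (fun z => G z.2) (x, 0)) x hx
    set m : ℝ≥0∞ := ex (L * ‖s‖ + L * R) * M with hm
    have hbd : ∀ x ∈ A, ∀ x', ex (L * ‖s + V x'‖) * g (x, 0) ≤ m := by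
      intro x hx x'
      have h1 : g (x, 0) ≤ M := le_iSup₂ (f := fun x _ => g (x, 0)) x hx
      rw [hm]
      gcongr
      apply ex_mono
      rw [← mul_add]
      gcongr
      exact (norm_add_le _ _).trans (by have := hR x'; gcongr)
    have hbd' : ∀ x', ex (L * ‖s + V x'‖) * M ≤ m := by
      intro x'
      rw [hm]
      gcongr
      apply ex_mono
      rw [← mul_add]
      gcongr
      exact (norm_add_le _ _).trans (by have := hR x'; gcongr)
    set f : H → ℝ≥0∞ := K.indicator (fun y => g (S u + y, s + V (S u + y))) with hf
    have hfm : Measurable f := by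
      refine Measurable.indicator ?_ hs.measK
      fun_prop
    have hfb : ∀ y, f y ≤ m := by
      intro y
      by_cases hy : y ∈ K
      · rw [hf, Set.indicator_of_mem hy]
        refine (hgL _ _ 0).trans ?_
        rw [sub_zero]
        exact hbd _ (hs.inv u hu y hy) _
      · rw [hf, Set.indicator_of_notMem hy]; exact zero_le
    have h1 : (TT S μ V)^[k+1] (fun z => G z.2) (u, s) = ∫⁻ y, f y ∂μ := by
      rw [Function.iterate_succ_apply']
      unfold TT
      refine lintegral_congr_ae ?_
      filter_upwards [hs.aeK] with y hy
      rw [hf, Set.indicator_of_mem hy]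
      rfl
    set d := ‖u - v‖ with hd
    have hd0 : 0 ≤ d := norm_nonneg _
    set c := ex (L * Λ * d + L * ε * ((k : ℝ) + 1)) with hc
    have h2 : ∫⁻ y, f (y - w) ∂μ ≤ c * (TT S μ V)^[k+1] (fun z => G z.2) (v, s)
        + ENNReal.ofReal (B * γ * d) * m := by
      rw [Function.iterate_succ_apply']
      calc _ ≤ ∫⁻ y, (c * g (S v + y, s + V (S v + y)) + ENNReal.ofReal (B * γ * d) * m) ∂μ := by
            refine lintegral_mono_ae ?_
            filter_upwards [hs.aeK] with y hy
            by_cases hy' : y - w ∈ K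
            · rw [hf, Set.indicator_of_mem hy']
              have hx := hs.inv u hu _ hy'
              have hx' := hs.inv v hv _ hy
              set x := S u + (y - w) with hxdef
              set x' := S v + y with hxdef'
              have hxx : ‖x - x'‖ ≤ γ * d := by
                have : x - x' = S u - S v - w := by rw [hxdef, hxdef']; abel
                rw [this]; exact hw
              refine (ih x hx x' hx' (s + V x)).trans ?_
              gcongr ?_ + ?_
              · calc _ ≤ ex (L * Λ * ‖x - x'‖ + L * ε * k) *
                    (ex (L * ‖(s + V x) - (s + V x')‖) * g (x', s + V x')) := by
                      gcongr; exact hgL _ _ _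
                  _ ≤ _ := by
                    rw [← mul_assoc, ← ex_add]
                    gcongr
                    apply ex_mono
                    rw [add_sub_add_left_eq_sub]
                    have e1 : L * ‖V x - V x'‖ ≤ L * (ε + Λ * (γ * d)) := by
                      gcongr
                      exact (hV x hx x' hx').trans (by gcongr)
                    have e2 : L * Λ * ‖x - x'‖ ≤ L * Λ * (γ * d) := by gcongr
                    have e3 : L * Λ * (γ * d) ≤ L * Λ * (1/2 * d) := by gcongr
                    nlinarith
              · refine mul_le_mul' (ENNReal.ofReal_le_ofReal ?_) (hbd' x)
                exact (mul_le_mul_of_nonneg_left hxx hB0).trans_eq (mul_assoc _ _ _).symm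
            · rw [hf, Set.indicator_of_notMem hy']; exact zero_le
        _ = _ := by
            rw [lintegral_add_right _ measurable_const, lintegral_const_mul' _ _ (ex_ne_top _)]
            simp [TT, hg, hc]
    rw [h1]
    refine (hsh f hfm m hfb).trans ?_
    refine (add_le_add_left h2 _).trans ?_
    push_cast
    rw [add_assoc]
    gcongr ?_ + ?_
    · exact le_rfl
    · have hm2 : m ≤ ex (2 * (L * R)) * (ex (L * ‖s‖) *
          ⨆ x ∈ A, (TT S μ V)^[k+1] (fun z => G z.2) (x, 0)) := by
        rw [hm]
        calc _ ≤ ex (L * ‖s‖ + L * R) * (ex (L * R) * ⨆ x ∈ A, (TT S μ V)^[k+1] (fun z => G z.2) (x, 0)) := by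
              gcongr
          _ = _ := by
            rw [two_mul, ex_add, ex_add]; ring
      calc _ = (ENNReal.ofReal (B * γ * d) + ENNReal.ofReal (C * d)) * m := by ring
        _ ≤ (ENNReal.ofReal (B * γ * d) + ENNReal.ofReal (C * d)) * (ex (2 * (L * R)) * (ex (L * ‖s‖) *
          ⨆ x ∈ A, (TT S μ V)^[k+1] (fun z => G z.2) (x, 0))) := by gcongr
        _ ≤ _ := by
          rw [← mul_assoc]
          gcongr
          rw [← ENNReal.ofReal_add (by positivity) (by positivity), ex,
            ← ENNReal.ofReal_mul (by positivity)]
          apply ENNReal.ofReal_le_ofReal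
          have e4 : B * d * (γ * Real.exp (2 * (L * R))) ≤ B * d * (1/2) := by gcongr
          have e5 : B * d * (1/2) = C * d * Real.exp (2 * (L * R)) := by rw [hB]; ring
          nlinarith

end Core


section Core2
variable {H : Type} [NormedAddCommGroup H] [MeasurableSpace H] [BorelSpace H]
  [SecondCountableTopology H]
  {E : Type} [NormedAddCommGroup E] [MeasurableSpace E] [BorelSpace E]
  [SecondCountableTopology E]
variable {S : H → H} {μ : Measure H} [IsProbabilityMeasure μ] {A K : Set H} {V : H → E}

lemma eq_ex_log {x : ℝ≥0∞} (h0 : x ≠ 0) (h1 : x ≠ ⊤) : x = ex (Real.log x.toReal) := by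
  unfold ex
  rw [Real.exp_log (ENNReal.toReal_pos h0 h1), ENNReal.ofReal_toReal h1]

lemma pop_le {L R : ℝ} (hs : Sys S μ A K) (hL : 0 ≤ L) (hR : ∀ x, ‖V x‖ ≤ R)
    {a b : ℝ≥0∞} (ha : a ≠ ⊤) (hb : b ≠ ⊤) {φ : H → ℝ≥0∞} {g : H × E → ℝ≥0∞}
    (h : ∀ x ∈ A, ∀ s, a * φ x ≤ b * (ex (L * ‖s‖) * g (x, s))) (m : ℕ) :
    ∀ u ∈ A, ∀ s, a * (Pop S μ)^[m] φ u ≤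
      b * (ex (L * ‖s‖ + m * (L * R)) * (TT S μ V)^[m] g (u, s)) := by
  induction m with
  | zero => simpa using h
  | succ m ih =>
    intro u hu s
    simp only [Function.iterate_succ_apply']
    conv_lhs => unfold Pop
    conv_rhs => unfold TT
    rw [← lintegral_const_mul' _ _ (ex_ne_top _), ← lintegral_const_mul' _ _ ha,
      ← lintegral_const_mul' _ _ hb]
    refine lintegral_mono_ae ?_
    filter_upwards [hs.aeK] with y hy
    refine (ih _ (hs.inv u hu y hy) (s + V (S u + y))).trans ?_
    gcongr
    apply ex_mono
    push_cast
    have h1 : L * ‖s + V (S u + y)‖ ≤ L * (‖s‖ + R) := by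
      gcongr
      exact (norm_add_le _ _).trans (by gcongr; exact hR _)
    · linarith
    · exact le_rfl

lemma irr_unif (hs : Sys S μ A K) {δ : ℝ} (hδ : 0 < δ) :
    ∃ m₀ : ℕ, ∃ p : ℝ≥0∞, 0 < p ∧ p ≠ ⊤ ∧ ∀ v ∈ A, ∃ m ≤ m₀, ∀ u ∈ A,
      p ≤ (Pop S μ)^[m] ((Metric.ball v δ).indicator 1) u := by
  have hmono : ∀ (φ ψ : H → ℝ≥0∞), (∀ x, φ x ≤ ψ x) → ∀ m x, (Pop S μ)^[m] φ x ≤ (Pop S μ)^[m] ψ x := by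
    intro φ ψ h m
    induction m with
    | zero => exact h
    | succ m ih =>
      intro x
      simp only [Function.iterate_succ_apply']
      exact lintegral_mono fun y => ih _
  choose! m p hp0 hp using fun v (hv : v ∈ A) => hs.irr (δ/2) (by positivity) v hv
  obtain ⟨t, htA, ht⟩ := hs.comp.elim_nhds_subcover (fun v => Metric.ball v (δ/2))
    (fun v _ => Metric.ball_mem_nhds v (by positivity))
  refine ⟨t.sup m, min 1 (t.inf p), ?_, ?_, ?_⟩
  · refine lt_min one_pos ?_
    rw [Finset.lt_inf_iff (by simp)]
    exact fun v hv => hp0 v (htA v hv)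
  · exact ne_top_of_le_ne_top ENNReal.one_ne_top (min_le_left _ _)
  · intro v hv
    obtain ⟨w, hw, hvw⟩ := Set.mem_iUnion₂.1 (ht hv)
    refine ⟨m w, Finset.le_sup hw, fun u hu => ?_⟩
    refine ((min_le_right _ _).trans (Finset.inf_le hw)).trans ((hp w (htA w hw) u hu).trans ?_)
    apply hmono
    intro x
    apply Set.indicator_le_indicator_of_subset _ (fun _ => zero_le)
    apply Metric.ball_subset_ball'
    rw [Metric.mem_ball, dist_comm] at hvw
    linarith

lemma harnack {L R ε : ℝ} (hs : Sys S μ A K) (hL : 0 ≤ L) (hR : ∀ x, ‖V x‖ ≤ R)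
    (hVc : Continuous V) (hε : 0 < ε) :
    ∃ c : ℝ, ∀ G : E → ℝ≥0∞, Measurable G → LL (H := H) L (fun z => G z.2) → (∀ s, G s ≠ ⊤) →
      ∀ k : ℕ, ∀ u ∈ A, ∀ v ∈ A,
      (TT S μ V)^[k] (fun z => G z.2) (v, 0) ≤
        ex (c + ε * k) * (TT S μ V)^[k] (fun z => G z.2) (u, 0) := by
  have hR0 : 0 ≤ R := (norm_nonneg _).trans (hR 0)
  set ε' := ε / (L + 1) with hε'
  have hε0 : 0 < ε' := by positivity
  have hLε : L * ε' ≤ ε := by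
    rw [hε', mul_div_assoc', div_le_iff₀ (by positivity)]; nlinarith
  have huc : UniformContinuousOn V A := hs.comp.uniformContinuousOn_of_continuous hVc.continuousOn
  obtain ⟨δ₀, hδ₀, hδV⟩ := Metric.uniformContinuousOn_iff.1 huc ε' hε0
  set Λ := 2 * R / δ₀ with hΛ
  have hΛ0 : 0 ≤ Λ := by positivity
  have hVV : ∀ u ∈ A, ∀ v ∈ A, ‖V u - V v‖ ≤ ε' + Λ * ‖u - v‖ := by
    intro u hu v hv
    by_cases h : ‖u - v‖ < δ₀
    · have := hδV u hu v hv (by rwa [dist_eq_norm])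
      rw [dist_eq_norm] at this
      have : 0 ≤ Λ * ‖u - v‖ := by positivity
      linarith
    · have h1 : ‖V u - V v‖ ≤ R + R := (norm_sub_le _ _).trans (add_le_add (hR u) (hR v))
      have h2 : Λ * δ₀ = 2 * R := by rw [hΛ]; field_simp
      have h3 : Λ * δ₀ ≤ Λ * ‖u - v‖ := by gcongr; exact not_lt.1 h
      linarith
  obtain ⟨B, hB0, hB⟩ := equi hs hL hR hVc.measurable hΛ0 hε0.le hVV
  set δ := min (1 / (L * Λ + 1)) (1 / (4 * B + 1)) with hδ
  have hδ0 : 0 < δ := by rw [hδ]; positivity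
  have hδ1 : L * Λ * δ ≤ 1 := by
    calc L * Λ * δ ≤ L * Λ * (1 / (L * Λ + 1)) := by gcongr; exact min_le_left _ _
      _ ≤ 1 := by rw [mul_one_div, div_le_one (by positivity)]; linarith
  have hδ2 : B * δ ≤ 1 / 4 := by
    calc B * δ ≤ B * (1 / (4 * B + 1)) := by gcongr; exact min_le_right _ _
      _ ≤ 1/4 := by rw [mul_one_div, div_le_div_iff₀ (by positivity) (by positivity)]; linarith
  obtain ⟨m₀, p, hp0, hpt, hp⟩ := irr_unif hs hδ0
  refine ⟨Real.log (4 / p).toReal + 1 + 2 * (m₀ * (L * R)), ?_⟩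
  intro G hGm hG hGt k u hu v hv
  set g := (TT S μ V)^[k] (fun z => G z.2) with hg
  have hgL : LL L g := TT_iter_LL hG k
  set M := ⨆ x ∈ A, g (x, 0) with hM
  have hgM : ∀ x ∈ A, g (x, 0) ≤ M := fun x hx => le_iSup₂ (f := fun x _ => g (x, 0)) x hx
  have hMt : M ≠ ⊤ := by
    refine ne_top_of_le_ne_top (ENNReal.mul_ne_top (ex_ne_top (k * (L * R))) (hGt 0))
      (iSup₂_le fun x hx => ?_)
    simpa using TT_succ_le hs hL hR hG 0 k x hx 0
  refine (hgM v hv).trans ?_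
  by_cases hM0 : M = 0
  · rw [hM0]; exact zero_le
  have : M / 2 < M := ENNReal.half_lt_self hM0 hMt
  obtain ⟨v0, hv0, hlt⟩ : ∃ v0, ∃ (_ : v0 ∈ A), M / 2 < g (v0, 0) := by
    rw [hM] at this
    simpa only [lt_iSup_iff] using this
  have key : ∀ x ∈ A, ∀ s, M * (Metric.ball v0 δ).indicator 1 x ≤
      (4 * ex (1 + ε * k)) * (ex (L * ‖s‖) * g (x, s)) := by
    intro x hx s
    by_cases hxb : x ∈ Metric.ball v0 δ
    · rw [Set.indicator_of_mem hxb, Pi.one_apply, mul_one]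
      have h1 := hB G hGm hG k v0 hv0 x hx 0
      have hd : ‖v0 - x‖ ≤ δ := by
        rw [← dist_eq_norm, dist_comm]; exact (Metric.mem_ball.1 hxb).le
      have h2 : M / 2 ≤ ex (1 + ε * k) * g (x, 0) + M / 4 := by
        refine hlt.le.trans (h1.trans ?_)
        gcongr ?_ + ?_
        · gcongr
          apply ex_mono
          have : L * Λ * ‖v0 - x‖ ≤ L * Λ * δ := by gcongr
          have : L * ε' * k ≤ ε * k := by gcongr
          linarith
        · rw [norm_zero, mul_zero, ex_zero, one_mul, div_eq_mul_inv, mul_comm]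
          gcongr
          rw [show (4 : ℝ≥0∞)⁻¹ = ENNReal.ofReal (1/4) by
            rw [one_div, ENNReal.ofReal_inv_of_pos (by norm_num)]; norm_num]
          apply ENNReal.ofReal_le_ofReal
          exact le_trans (by gcongr) hδ2
      have h3 : M / 4 ≤ ex (1 + ε * k) * g (x, 0) := by
        have h4 : M / 2 = M / 4 + M / 4 := by
          rw [← ENNReal.add_div, ← two_mul, show (4 : ℝ≥0∞) = 2 * 2 by norm_num]
          rw [ENNReal.mul_div_mul_left _ _ (by norm_num) (by norm_num)]
        rw [h4] at h2
        exact (ENNReal.add_le_add_iff_right (ENNReal.div_ne_top hMt (by norm_num))).1 h2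
      have h5 : M = 4 * (M / 4) := by
        rw [ENNReal.mul_div_cancel (by norm_num) (by norm_num)]
      calc M = 4 * (M / 4) := h5
        _ ≤ 4 * (ex (1 + ε * k) * (ex (L * ‖s‖) * g (x, s))) := by
            gcongr
            refine h3.trans ?_
            gcongr
            simpa using hgL x 0 s
        _ = _ := by ring
    · rw [Set.indicator_of_notMem hxb, mul_zero]; exact zero_le
  obtain ⟨m, hm, hpm⟩ := hp v0 hv0
  have h1 := pop_le hs hL hR hMt (ENNReal.mul_ne_top (by norm_num) (ex_ne_top _)) key m u hu 0
  rw [hg, ← Function.iterate_add_apply, add_comm m k] at h1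
  have h2 := TT_succ_le hs hL hR hG k m u hu 0
  rw [norm_zero, mul_zero, zero_add] at h1
  have h3 : M * p ≤ 4 * ex (1 + ε * k) * (ex (m * (L * R)) * (ex (m * (L * R)) * g (u, 0))) := by
    refine le_trans ?_ (h1.trans ?_)
    · gcongr; exact hpm u hu
    · gcongr
  have h4 : M ≤ 4 * ex (1 + ε * k) * (ex (m * (L * R)) * (ex (m * (L * R)) * g (u, 0))) / p := by
    rwa [ENNReal.le_div_iff_mul_le (Or.inl hp0.ne') (Or.inl hpt)]
  refine h4.trans ?_
  have h5 : (4 / p) = ex (Real.log (4 / p).toReal) := 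
    eq_ex_log (ENNReal.div_ne_zero.2 ⟨by norm_num, hpt⟩) (ENNReal.div_ne_top (by norm_num) hp0.ne')
  calc _ = (4 / p) * (ex (1 + ε * k) * ex (m * (L * R)) * ex (m * (L * R))) * g (u, 0) := by
        simp only [div_eq_mul_inv]; ring
    _ ≤ _ := by
      rw [h5, ← ex_add, ← ex_add, ← ex_add]
      gcongr
      apply ex_mono
      rw [← h5]
      have : (m : ℝ) * (L * R) ≤ m₀ * (L * R) := by gcongr
      linarith

end Core2


section Core3
variable {H : Type} [NormedAddCommGroup H] [MeasurableSpace H] [BorelSpace H]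
  [SecondCountableTopology H]
  {E : Type} [NormedAddCommGroup E] [NormedSpace ℝ E] [MeasurableSpace E] [BorelSpace E]
  [SecondCountableTopology E]
variable {S : H → H} {μ : Measure H} [IsProbabilityMeasure μ] {A K : Set H} {V : H → E}

def GF (F : E → ℝ) (k : ℕ) (s : E) : ℝ≥0∞ := ex (k * F ((k : ℝ)⁻¹ • s))

def ZZ (S : H → H) (μ : Measure H) (V : H → E) (F : E → ℝ) (k : ℕ) (u : H) : ℝ≥0∞ :=
  (TT S μ V)^[k] (fun z => GF F k z.2) (u, 0)

def IsLam (S : H → H) (μ : Measure H) (A : Set H) (V : H → E) (F : E → ℝ) (lam : ℝ) : Prop :=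
  ∀ ε > 0, ∀ᶠ k : ℕ in atTop, ∀ u ∈ A,
    ex (k * (lam - ε)) ≤ ZZ S μ V F k u ∧ ZZ S μ V F k u ≤ ex (k * (lam + ε))

lemma ex_lt_iff {x y : ℝ} : ex x < ex y ↔ x < y := by
  rw [← not_le, ← not_le, ex_le_iff]

def LipF (L : ℝ) (F : E → ℝ) : Prop := ∀ a b, F a ≤ F b + L * ‖a - b‖

lemma LipF.cont {L : ℝ} {F : E → ℝ} (h : LipF L F) : Continuous F := by
  have : LipschitzWith (Real.toNNReal L) F := LipschitzWith.of_le_add_mul' L (by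
    intro a b; rw [dist_eq_norm]; exact h a b)
  exact this.continuous

lemma GF_meas {L : ℝ} {F : E → ℝ} (h : LipF L F) (k : ℕ) : Measurable (GF F k) := by
  have := h.cont
  unfold GF ex
  fun_prop

lemma GF_LL {L : ℝ} (hL : 0 ≤ L) {F : E → ℝ} (h : LipF L F) (k : ℕ) :
    LL (H := H) L (fun z => GF F k z.2) := by
  intro u s s'
  simp only [GF]
  rw [← ex_add]
  apply ex_mono
  rcases Nat.eq_zero_or_pos k with rfl | hk
  · simp; positivity
  · have hk' : (0 : ℝ) < k := by exact_mod_cast hk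
    have := h ((k : ℝ)⁻¹ • s) ((k : ℝ)⁻¹ • s')
    rw [← smul_sub, norm_smul, Real.norm_of_nonneg (by positivity)] at this
    have h2 := mul_le_mul_of_nonneg_left this hk'.le
    have h3 : (k : ℝ) * (L * ((k : ℝ)⁻¹ * ‖s - s'‖)) = L * ‖s - s'‖ := by field_simp
    linarith

lemma TT_trans (l : ℕ) (g : H × E → ℝ≥0∞) (s0 : E) : ∀ u s,
    (TT S μ V)^[l] (fun z => g (z.1, z.2 + s0)) (u, s) = (TT S μ V)^[l] g (u, s + s0) := by
  induction l with
  | zero => intro u s; rfl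
  | succ l ih =>
    intro u s
    simp only [Function.iterate_succ_apply']
    refine lintegral_congr fun y => ?_
    simp only [ih]
    rw [add_right_comm]

/-- concatenation. -/
lemma ZZ_concat (hs : Sys S μ A K) {F₁ F₂ F₃ : E → ℝ} {k l : ℕ} {m : ℝ}
    (hF : ∀ s s' : E, k * F₁ ((k : ℝ)⁻¹ • s) + l * F₂ ((l : ℝ)⁻¹ • s') ≤
      ((k + l : ℕ) : ℝ) * F₃ (((k + l : ℕ) : ℝ)⁻¹ • (s' + s)))
    (hm : ∀ u ∈ A, ex m ≤ ZZ S μ V F₂ l u) :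
    ∀ u ∈ A, ex m * ZZ S μ V F₁ k u ≤ ZZ S μ V F₃ (k + l) u := by
  intro u hu
  have h1 : ∀ x ∈ A, ∀ s : E, GF F₁ k s ≤ ex (-m) * (TT S μ V)^[l] (fun z => GF F₃ (k + l) z.2) (x, s) := by
    intro x hx s
    rw [← ex_mul_le_iff]
    have h2 := TT_trans (S := S) (μ := μ) (V := V) l (fun z => GF F₃ (k + l) z.2) s x 0
    rw [zero_add] at h2
    rw [← h2]
    have h3 := TT_iter_mono (V := V) hs (ex_ne_top (-(k * F₁ ((k : ℝ)⁻¹ • s)))) 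
      (g := fun z => GF F₂ l z.2) (g' := fun z => GF F₃ (k + l) (z.2 + s)) (by
        intro x _ s'
        rw [← ex_mul_le_iff]
        simp only [GF]
        rw [← ex_add]
        exact ex_mono (hF s s')) l x hx 0
    rw [← ex_mul_le_iff] at h3
    refine le_trans ?_ h3
    rw [mul_comm]
    simp only [GF]
    gcongr
    exact hm x hx
  have h4 := TT_iter_mono (V := V) hs (ex_ne_top (-m)) (g := fun z => GF F₁ k z.2)
    (g' := (TT S μ V)^[l] (fun z => GF F₃ (k + l) z.2)) h1 k u hu 0
  rw [← ex_mul_le_iff] at h4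
  refine h4.trans_eq ?_
  unfold ZZ
  rw [Function.iterate_add_apply]

lemma ZZ_upper {L R : ℝ} (hs : Sys S μ A K) (hL : 0 ≤ L) (hR : ∀ x, ‖V x‖ ≤ R) {F : E → ℝ}
    (hF : LipF L F) (k : ℕ) : ∀ u ∈ A, ZZ S μ V F k u ≤ ex (k * (F 0 + L * R)) := by
  intro u hu
  have := TT_succ_le hs hL hR (GF_LL hL hF k) 0 k u hu 0
  rw [zero_add] at this
  refine this.trans ?_
  simp only [Function.iterate_zero, id, GF, smul_zero]
  rw [← ex_add]
  apply ex_mono; linarith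

lemma ZZ_lower {L R : ℝ} (hs : Sys S μ A K) (hL : 0 ≤ L) (hR : ∀ x, ‖V x‖ ≤ R) {F : E → ℝ}
    (hF : LipF L F) (k : ℕ) : ∀ u ∈ A, ex (k * (F 0 - L * R)) ≤ ZZ S μ V F k u := by
  intro u hu
  have h : ∀ j : ℕ, GF F k (0 : E) ≤ ex (j * (L * R)) * (TT S μ V)^[j] (fun z => GF F k z.2) (u, 0) := by
    intro j
    induction j with
    | zero => simp [ex_zero]
    | succ j ih =>
      refine ih.trans ?_
      have := le_TT_succ hs hL hR (GF_LL (H := H) hL hF k) j u hu 0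
      calc _ ≤ ex (j * (L * R)) * (ex (L * R) * (TT S μ V)^[j+1] (fun z => GF F k z.2) (u, 0)) := by
            gcongr
        _ = _ := by
          rw [← mul_assoc, ← ex_add]; push_cast; ring_nf
  have h1 := h k
  have h2 : ex (-(k * (L * R))) * GF F k (0 : E) ≤ ZZ S μ V F k u := by
    rw [ex_mul_le_iff, neg_neg]; exact h1
  refine le_trans ?_ h2
  simp only [GF, smul_zero]
  rw [← ex_add]
  apply ex_mono; linarith

lemma concave_concat {F : E → ℝ} (hc : ConcaveOn ℝ Set.univ F) {k l : ℕ} (hk : 0 < k) (hl : 0 < l)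
    (s s' : E) : k * F ((k : ℝ)⁻¹ • s) + l * F ((l : ℝ)⁻¹ • s') ≤
      ((k + l : ℕ) : ℝ) * F (((k + l : ℕ) : ℝ)⁻¹ • (s' + s)) := by
  have hk' : (0 : ℝ) < k := by exact_mod_cast hk
  have hl' : (0 : ℝ) < l := by exact_mod_cast hl
  have h := hc.2 (Set.mem_univ ((k : ℝ)⁻¹ • s)) (Set.mem_univ ((l : ℝ)⁻¹ • s'))
    (show (0 : ℝ) ≤ k / (k + l) by positivity) (show (0 : ℝ) ≤ l / (k + l) by positivity)
    (by field_simp)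
  have e1 : ((k : ℝ) / (k + l)) • ((k : ℝ)⁻¹ • s) + ((l : ℝ) / (k + l)) • ((l : ℝ)⁻¹ • s') =
      ((k + l : ℕ) : ℝ)⁻¹ • (s' + s) := by
    rw [smul_smul, smul_smul, smul_add, add_comm]
    congr 1
    · congr 1; push_cast; field_simp
    · congr 1; push_cast; field_simp
  rw [e1, smul_eq_mul, smul_eq_mul] at h
  have h2 := mul_le_mul_of_nonneg_left h (show (0 : ℝ) ≤ ((k + l : ℕ) : ℝ) by positivity)
  refine le_trans (le_of_eq ?_) h2
  push_cast
  field_simp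

theorem exists_lam {L R : ℝ} (hs : Sys S μ A K) (hL : 0 ≤ L) (hR : ∀ x, ‖V x‖ ≤ R)
    (hVc : Continuous V) {F : E → ℝ} (hF : LipF L F) (hc : ConcaveOn ℝ Set.univ F) :
    ∃ lam : ℝ, IsLam S μ A V F lam := by
  set m : ℕ → ℝ≥0∞ := fun k => ⨅ u ∈ A, ZZ S μ V F k u with hm
  obtain ⟨x0, hx0⟩ := hs.ne
  have hm1 : ∀ k : ℕ, ex (k * (F 0 - L * R)) ≤ m k := fun k =>
    le_iInf₂ fun u hu => ZZ_lower hs hL hR hF k u hu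
  have hmle : ∀ k, ∀ u ∈ A, m k ≤ ZZ S μ V F k u := fun k u hu =>
    iInf₂_le (f := fun u _ => ZZ S μ V F k u) u hu
  have hm2 : ∀ k : ℕ, m k ≤ ex (k * (F 0 + L * R)) := fun k =>
    (hmle k x0 hx0).trans (ZZ_upper hs hL hR hF k x0 hx0)
  set a : ℕ → ℝ := fun k => - Real.log (m k).toReal with ha
  have hma : ∀ k, m k = ex (- a k) := by
    intro k
    rw [ha]; simp only [neg_neg]
    exact eq_ex_log ((ex_pos _).trans_le (hm1 k)).ne' (ne_top_of_le_ne_top (ex_ne_top _) (hm2 k))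
  have ha0 : a 0 = 0 := by
    have h1 := hm1 0
    have h2 := hm2 0
    rw [hma, ex_le_iff] at h1 h2
    simp at h1 h2
    linarith
  have hsub : Subadditive a := by
    intro k l
    rcases Nat.eq_zero_or_pos k with rfl | hk
    · simp [ha0]
    rcases Nat.eq_zero_or_pos l with rfl | hl
    · simp [ha0]
    rw [← neg_le_neg_iff, ← ex_le_iff, ← hma]
    refine le_iInf₂ fun u hu => ?_
    have := ZZ_concat hs (concave_concat hc hk hl) (m := - a l) (V := V)
      (fun u hu => by rw [← hma]; exact hmle l u hu) u hu
    refine le_trans ?_ this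
    rw [neg_add, add_comm, ex_add, ← hma, ← hma]
    gcongr
    exact hmle k u hu
  have hbdd : BddBelow (Set.range fun n => a n / n) := by
    refine ⟨min 0 (-(F 0 + L * R)), ?_⟩
    rintro _ ⟨k, rfl⟩
    rcases Nat.eq_zero_or_pos k with rfl | hk
    · simp
    have hk' : (0 : ℝ) < k := by exact_mod_cast hk
    refine (min_le_right _ _).trans ?_
    dsimp only
    rw [le_div_iff₀ hk']
    have := hm2 k
    rw [hma, ex_le_iff] at this
    linarith
  have hlim := hsub.tendsto_lim hbdd
  refine ⟨- hsub.lim, fun ε hε => ?_⟩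
  obtain ⟨c, hcH⟩ := harnack (V := V) hs hL hR hVc (half_pos (half_pos hε))
  have e1 : ∀ᶠ k : ℕ in atTop, a k / k < hsub.lim + ε / 2 :=
    hlim.eventually_lt_const (by linarith)
  have e2 : ∀ᶠ k : ℕ in atTop, hsub.lim - ε / 2 < a k / k :=
    hlim.eventually_const_lt (by linarith)
  have e3 : ∀ᶠ k : ℕ in atTop, c ≤ ε / 4 * k := by
    have : Tendsto (fun k : ℕ => ε / 4 * (k : ℝ)) atTop atTop :=
      tendsto_natCast_atTop_atTop.const_mul_atTop (by positivity)
    exact this.eventually_ge_atTop c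
  filter_upwards [e1, e2, e3, eventually_gt_atTop 0] with k h1 h2 h3 hk
  have hk' : (0 : ℝ) < k := by exact_mod_cast hk
  rw [div_lt_iff₀ hk'] at h1
  rw [lt_div_iff₀ hk'] at h2
  intro u hu
  constructor
  · refine le_trans ?_ (hmle k u hu)
    rw [hma]
    apply ex_mono
    nlinarith
  · have h4 : ex (-(c + ε / 2 / 2 * k)) * ZZ S μ V F k u ≤ m k := by
      refine le_iInf₂ fun v hv => ?_
      rw [ex_mul_le_iff, neg_neg]
      exact hcH _ (GF_meas hF k) (GF_LL hL hF k) (fun s => ex_ne_top _) k v hv u hu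
    rw [ex_mul_le_iff, neg_neg, hma, ← ex_add] at h4
    refine h4.trans (ex_mono ?_)
    nlinarith

end Core3


section Core4

lemma convex_of_midpoint {X : Type*} [AddCommGroup X] [Module ℝ X] [TopologicalSpace X]
    [IsTopologicalAddGroup X] [ContinuousSMul ℝ X] {C : Set X} (hC : IsClosed C)
    (hm : ∀ x ∈ C, ∀ y ∈ C, (1/2 : ℝ) • (x + y) ∈ C) : Convex ℝ C := by
  rw [convex_iff_segment_subset]
  intro x hx y hy
  rw [segment_eq_image_lineMap]
  rintro _ ⟨t, ht, rfl⟩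
  by_contra hcon
  set D : Set ℝ := (fun t => AffineMap.lineMap x y t) ⁻¹' C with hD
  have hDc : IsClosed D := hC.preimage AffineMap.lineMap_continuous
  have h0 : (0 : ℝ) ∈ D := by simp [hD, hx]
  have h1 : (1 : ℝ) ∈ D := by simp [hD, hy]
  have htD : t ∉ D := hcon
  have hDm : ∀ a ∈ D, ∀ b ∈ D, (a + b) / 2 ∈ D := by
    intro a ha b hb
    have := hm _ ha _ hb
    simp only [hD, Set.mem_preimage]
    convert this using 1
    simp only [AffineMap.lineMap_apply_module]
    module
  have hD1 : IsCompact (D ∩ Set.Icc 0 t) := isCompact_Icc.inter_left hDc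
  have hD2 : IsCompact (D ∩ Set.Icc t 1) := isCompact_Icc.inter_left hDc
  obtain ⟨a, ha⟩ := hD1.exists_isGreatest ⟨0, h0, le_rfl, ht.1⟩
  obtain ⟨b, hb⟩ := hD2.exists_isLeast ⟨1, h1, ht.2, le_rfl⟩
  have hat : a < t := lt_of_le_of_ne ha.1.2.2 (fun h => htD (h ▸ ha.1.1))
  have hbt : t < b := lt_of_le_of_ne hb.1.2.1 (fun h => htD (h ▸ hb.1.1))
  have hc := hDm a ha.1.1 b hb.1.1
  rcases le_total ((a+b)/2) t with h | h
  · have := ha.2 ⟨hc, by linarith [ha.1.2.1], h⟩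
    linarith
  · have := hb.2 ⟨hc, h, by linarith [hb.1.2.2]⟩
    linarith

variable {H : Type} [NormedAddCommGroup H] [MeasurableSpace H] [BorelSpace H]
  [SecondCountableTopology H]
  {E : Type} [NormedAddCommGroup E] [NormedSpace ℝ E] [MeasurableSpace E] [BorelSpace E]
  [SecondCountableTopology E]
variable {S : H → H} {μ : Measure H} [IsProbabilityMeasure μ] {A K : Set H} {V : H → E}

lemma TT_iter_sum_le {R : ℝ} (hs : Sys S μ A K) (hR : ∀ x, ‖V x‖ ≤ R) (hVm : Measurable V)
    {ι : Type*} (I : Finset ι) (c : ι → ℝ≥0∞) (hc : ∀ i, c i ≠ ⊤) (g : H × E → ℝ≥0∞)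
    (g' : ι → H × E → ℝ≥0∞) (hg' : ∀ i, Measurable (g' i)) (k : ℕ) : ∀ r : ℝ,
    (∀ u ∈ A, ∀ s, ‖s‖ ≤ r + k * R → g (u, s) ≤ ∑ i ∈ I, c i * g' i (u, s)) →
    ∀ u ∈ A, ∀ s, ‖s‖ ≤ r →
      (TT S μ V)^[k] g (u, s) ≤ ∑ i ∈ I, c i * (TT S μ V)^[k] (g' i) (u, s) := by
  induction k with
  | zero => intro r h u hu s hsr; exact h u hu s (by simpa using hsr)
  | succ k ih =>
    intro r h u hu s hsr
    simp only [Function.iterate_succ_apply']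
    have h1 := ih (r + R) (by
      intro u hu s hs'
      refine h u hu s (hs'.trans (le_of_eq ?_))
      push_cast; ring)
    have hmeas := fun i => TT_iter_meas (μ := μ) hs.contS hVm (hg' i) k
    have hS := hs.contS.measurable
    calc TT S μ V ((TT S μ V)^[k] g) (u, s) ≤ 
        ∫⁻ y, ∑ i ∈ I, c i * (TT S μ V)^[k] (g' i) (S u + y, s + V (S u + y)) ∂μ := by
          refine lintegral_mono_ae ?_
          filter_upwards [hs.aeK] with y hy
          refine h1 _ (hs.inv u hu y hy) _ ?_
          exact (norm_add_le _ _).trans (add_le_add hsr (hR _))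
      _ = _ := by
          rw [lintegral_finsetSum]
          · refine Finset.sum_congr rfl fun i _ => ?_
            rw [lintegral_const_mul' _ _ (hc i)]
            rfl
          · intro i _
            have := hmeas i
            fun_prop

lemma IsLam_mono (hs : Sys S μ A K) {F F' : E → ℝ} {lam lam' d : ℝ}
    (h : IsLam S μ A V F lam) (h' : IsLam S μ A V F' lam') (hF : ∀ a, F a ≤ F' a + d) :
    lam ≤ lam' + d := by
  refine le_of_forall_pos_le_add fun ε hε => ?_
  obtain ⟨u, hu⟩ := hs.ne
  obtain ⟨k, h1, h2, hk⟩ := ((h (ε/2) (half_pos hε)).and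
    ((h' (ε/2) (half_pos hε)).and (eventually_gt_atTop 0))).exists
  have hk' : (0 : ℝ) < k := by exact_mod_cast hk
  have h3 : ZZ S μ V F k u ≤ ex (k * d) * ZZ S μ V F' k u :=
    TT_iter_mono hs (ex_ne_top _) (by
      intro u _ s
      simp only [GF]
      rw [← ex_add]
      apply ex_mono
      have := mul_le_mul_of_nonneg_left (hF ((k : ℝ)⁻¹ • s)) hk'.le
      linarith) k u hu 0
  have h4 := ((h1 u hu).1.trans h3).trans (mul_le_mul_right (h2 u hu).2 _)
  rw [← ex_add, ex_le_iff, ← mul_add, mul_le_mul_iff_right₀ hk'] at h4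
  linarith

lemma IsLam_mid (hs : Sys S μ A K) {F₁ F₂ F₃ : E → ℝ} {l₁ l₂ l₃ : ℝ}
    (h₁ : IsLam S μ A V F₁ l₁) (h₂ : IsLam S μ A V F₂ l₂) (h₃ : IsLam S μ A V F₃ l₃)
    (hF : ∀ a b, F₁ a + F₂ b ≤ 2 * F₃ ((1/2 : ℝ) • (a + b))) :
    l₁ + l₂ ≤ 2 * l₃ := by
  refine le_of_forall_pos_le_add fun ε hε => ?_
  obtain ⟨u, hu⟩ := hs.ne
  obtain ⟨k₀, h3⟩ := eventually_atTop.1 (h₃ (ε/4) (by positivity))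
  obtain ⟨k, h1, h2, hk, hkk⟩ := ((h₁ (ε/4) (by positivity)).and
    ((h₂ (ε/4) (by positivity)).and ((eventually_gt_atTop 0).and (eventually_ge_atTop k₀)))).exists
  have hk' : (0 : ℝ) < k := by exact_mod_cast hk
  have h4 := ZZ_concat (V := V) hs (F₁ := F₁) (F₂ := F₂) (F₃ := F₃) (k := k) (l := k) (by
    intro s s'
    have := mul_le_mul_of_nonneg_left (hF ((k : ℝ)⁻¹ • s) ((k : ℝ)⁻¹ • s')) hk'.le
    have e : (1/2 : ℝ) • ((k : ℝ)⁻¹ • s + (k : ℝ)⁻¹ • s') = ((k + k : ℕ) : ℝ)⁻¹ • (s' + s) := by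
      rw [← smul_add, smul_smul, add_comm s s']
      congr 1
      push_cast; field_simp; norm_num
    rw [e] at this
    push_cast at this ⊢
    linarith) (fun u hu => (h2 u hu).1) u hu
  have h5 := (mul_le_mul_right (h1 u hu).1 _).trans (h4.trans (h3 (k + k) (by omega) u hu).2)
  rw [← ex_add, ex_le_iff] at h5
  push_cast at h5
  have h6 : (k : ℝ) * (l₁ + l₂) ≤ k * (2 * l₃ + ε) := by nlinarith
  exact le_of_mul_le_mul_left h6 hk'

def NN (t : ℝ) (x : E) (a : E) : ℝ := -(t * ‖a - x‖)

lemma NN_lip {t : ℝ} (ht : 0 ≤ t) (x : E) : LipF t (NN t x) := by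
  intro a b
  unfold NN
  have : ‖b - x‖ ≤ ‖a - x‖ + ‖a - b‖ := by
    have := norm_sub_le (a - x) (a - b)
    simpa using this
  nlinarith

lemma NN_concave {t : ℝ} (ht : 0 ≤ t) (x : E) : ConcaveOn ℝ Set.univ (NN t x) := by
  unfold NN
  apply ConvexOn.neg
  have h := (convexOn_univ_norm (E := E)).translate_left (-x)
  have h2 := h.smul ht
  simpa [Function.comp_def, sub_eq_add_neg] using h2

lemma clm_lip (l : E →L[ℝ] ℝ) : LipF ‖l‖ (fun a => l a) := by
  intro a b
  have := (le_abs_self _).trans (l.le_opNorm (a - b))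
  rw [map_sub] at this
  linarith

lemma clm_concave (l : E →L[ℝ] ℝ) : ConcaveOn ℝ Set.univ (fun a => l a) :=
  l.toLinearMap.concaveOn convex_univ

theorem cover [FiniteDimensional ℝ E] {R : ℝ} (hs : Sys S μ A K) (hR : ∀ x, ‖V x‖ ≤ R)
    (hVc : Continuous V) {lamf : ℝ → E → ℝ} (hlam : ∀ t ≥ 0, ∀ x, IsLam S μ A V (NN t x) (lamf t x))
    (l : E →L[ℝ] ℝ) {q m : ℝ} (hq : IsLam S μ A V (fun a => l a) q)
    (h : ∀ x : E, ∀ r : ℝ, (∀ t ≥ 0, r ≤ lamf t x) → l x + r ≤ m) : q ≤ m := by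
  by_contra hcon
  push Not at hcon
  set δ := (q - m) / 10 with hδ
  have hδ0 : 0 < δ := by rw [hδ]; linarith
  have h1 : ∀ x, ∃ t ≥ 0, lamf t x < m - l x + δ := by
    intro x
    by_contra hx
    push Not at hx
    have := h x (m - l x + δ) hx
    linarith
  choose t ht0 ht using h1
  haveI : ProperSpace E := FiniteDimensional.proper ℝ E
  obtain ⟨I, -, hI⟩ := (isCompact_closedBall (0 : E) R).elim_nhds_subcover
    (fun x => {a | l a < l x + δ ∧ t x * ‖a - x‖ < δ}) (by
      intro x _
      refine IsOpen.mem_nhds ?_ ⟨by linarith, by simpa using hδ0⟩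
      have o1 : IsOpen {a : E | l a < l x + δ} := isOpen_lt (by fun_prop) (by fun_prop)
      have o2 : IsOpen {a : E | t x * ‖a - x‖ < δ} := isOpen_lt (by fun_prop) (by fun_prop)
      exact o1.inter o2)
  have e1 : ∀ᶠ k : ℕ in atTop, ∀ x ∈ I, ∀ u ∈ A, 
      ZZ S μ V (NN (t x) x) k u ≤ ex (k * (lamf (t x) x + δ)) := by
    rw [Filter.eventually_all_finset]
    intro x _
    filter_upwards [hlam (t x) (ht0 x) x δ hδ0] with k hk u hu
    exact (hk u hu).2
  have e3 : ∀ᶠ k : ℕ in atTop, (I.card : ℝ) ≤ δ * k := by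
    have : Tendsto (fun k : ℕ => δ * (k : ℝ)) atTop atTop :=
      tendsto_natCast_atTop_atTop.const_mul_atTop (by positivity)
    exact this.eventually_ge_atTop _
  obtain ⟨k, h1, h2, h3, hk⟩ := (e1.and ((hq δ hδ0).and (e3.and (eventually_gt_atTop 0)))).exists
  have hk' : (0 : ℝ) < k := by exact_mod_cast hk
  obtain ⟨u, hu⟩ := hs.ne
  have h4 := TT_iter_sum_le hs hR hVc.measurable I (fun x => ex (k * (l x + 2 * δ)))
    (fun x => ex_ne_top _) (fun z => GF (fun a => l a) k z.2) (fun x z => GF (NN (t x) x) k z.2)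
    (fun x => (GF_meas (NN_lip (ht0 x) x) k).comp measurable_snd) k 0 (by
      intro u _ s hsR
      have hmem : (k : ℝ)⁻¹ • s ∈ Metric.closedBall (0 : E) R := by
        rw [mem_closedBall_zero_iff, norm_smul, Real.norm_of_nonneg (by positivity),
          inv_mul_le_iff₀ hk']
        linarith
      obtain ⟨x, hxI, hx⟩ := Set.mem_iUnion₂.1 (hI hmem)
      refine le_trans ?_ (Finset.single_le_sum (f := fun x => ex (k * (l x + 2 * δ)) * GF (NN (t x) x) k s)
        (fun _ _ => zero_le) hxI)
      simp only [GF]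
      rw [← ex_add, ← mul_add]
      apply ex_mono
      have hx1 := hx.1
      have hx2 := hx.2
      refine mul_le_mul_of_nonneg_left ?_ hk'.le
      simp only [NN]
      linarith) u hu 0 (by simp)
  have h5 : ZZ S μ V (fun a => l a) k u ≤ ∑ x ∈ I, ex (k * (m + 4 * δ)) := by
    refine h4.trans (Finset.sum_le_sum fun x hx => ?_)
    calc _ ≤ ex (k * (l x + 2 * δ)) * ex (k * (lamf (t x) x + δ)) :=
          mul_le_mul_right (h1 x hx u hu) _
      _ ≤ _ := by
        rw [← ex_add, ← mul_add]
        apply ex_mono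
        refine mul_le_mul_of_nonneg_left ?_ hk'.le
        linarith [ht x]
  have h6 : (I.card : ℝ≥0∞) ≤ ex I.card := by
    unfold ex
    rw [← ENNReal.ofReal_natCast]
    apply ENNReal.ofReal_le_ofReal
    linarith [Real.add_one_le_exp (I.card : ℝ)]
  rw [Finset.sum_const, nsmul_eq_mul] at h5
  have h7 := ((h2 u hu).1.trans h5).trans (mul_le_mul_left h6 _)
  rw [← ex_add, ex_le_iff] at h7
  have h8 : (k : ℝ) * (q - δ) ≤ k * (m + 5 * δ) := by nlinarith
  have h9 := le_of_mul_le_mul_left h8 hk'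
  linarith

theorem dual_lower [FiniteDimensional ℝ E] {R : ℝ} (hs : Sys S μ A K) (hR : ∀ x, ‖V x‖ ≤ R)
    (hVc : Continuous V) {x0 : E} {c : ℝ}
    (hyp : ∀ l : E →L[ℝ] ℝ, ∀ q, IsLam S μ A V (fun a => l a) q → l x0 - c ≤ q)
    {t : ℝ} (ht : 0 ≤ t) {lam : ℝ} (hl : IsLam S μ A V (NN t x0) lam) : -c ≤ lam := by
  have hex : ∀ t : ℝ, ∀ x : E, ∃ lam, 0 ≤ t → IsLam S μ A V (NN t x) lam := by
    intro t x
    by_cases h : 0 ≤ t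
    · obtain ⟨lam, h'⟩ := exists_lam hs h hR hVc (NN_lip h x) (NN_concave h x)
      exact ⟨lam, fun _ => h'⟩
    · exact ⟨0, fun h' => absurd h' h⟩
  choose lamf hlam' using hex
  have hlam : ∀ t ≥ 0, ∀ x, IsLam S μ A V (NN t x) (lamf t x) := fun t ht x => hlam' t x ht
  have hlip : ∀ t ≥ 0, ∀ x y, lamf t x ≤ lamf t y + t * ‖x - y‖ := by
    intro t ht x y
    refine IsLam_mono hs (hlam t ht x) (hlam t ht y) fun a => ?_
    unfold NN
    have : ‖a - y‖ ≤ ‖a - x‖ + ‖x - y‖ := norm_sub_le_norm_sub_add_norm_sub _ _ _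
    nlinarith
  have hcont : ∀ t ≥ 0, Continuous (lamf t) := fun t ht => LipF.cont (L := t) (hlip t ht)
  have hq : ∀ l : E →L[ℝ] ℝ, ∃ q, IsLam S μ A V (fun a => l a) q := fun l =>
    exists_lam hs (norm_nonneg l) hR hVc (clm_lip l) (clm_concave l)
  by_contra hcon
  push Not at hcon
  have hlam0 : lamf t x0 ≤ lam + 0 := IsLam_mono hs (hlam t ht x0) hl (fun a => by simp)
  set c' := (c - lam) / 2 with hc'
  have hcc : c < c' := by rw [hc']; linarith
  have hlc : lamf t x0 < -c' := by rw [hc']; linarith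
  set C : Set (E × ℝ) := {p | ∀ t ≥ 0, p.2 ≤ lamf t p.1} with hC
  have hCc : IsClosed C := by
    have : C = ⋂ t ∈ Set.Ici (0 : ℝ), {p : E × ℝ | p.2 ≤ lamf t p.1} := by
      ext p; simp [hC]
    rw [this]
    exact isClosed_biInter fun t ht => isClosed_le continuous_snd ((hcont t ht).comp continuous_fst)
  have hCconv : Convex ℝ C := by
    apply convex_of_midpoint hCc
    rintro ⟨x, r⟩ hx ⟨y, r'⟩ hy t ht
    have h1 := hx t ht
    have h2 := hy t ht
    have h3 := IsLam_mid hs (hlam t ht x) (hlam t ht y) (hlam t ht ((1/2 : ℝ) • (x + y))) (by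
      intro a b
      unfold NN
      rw [← smul_sub, norm_smul, add_sub_add_comm]
      have := norm_add_le (a - x) (b - y)
      rw [Real.norm_of_nonneg (by norm_num)]
      nlinarith)
    simp only [Prod.mk_add_mk, Prod.smul_mk, smul_eq_mul] at h1 h2 ⊢
    linarith
  set D : Set (E × ℝ) := {p | -c' + t * ‖p.1 - x0‖ < p.2} with hD
  have hDo : IsOpen D := isOpen_lt (by fun_prop) (by fun_prop)
  have hDconv : Convex ℝ D := by
    have h2 : ConvexOn ℝ Set.univ (fun a : E => -c' + t * ‖a - x0‖) := by
      have := (NN_concave ht x0).neg.add_const (-c')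
      refine this.congr fun a _ => ?_
      simp [NN, add_comm]
    have := h2.convex_strict_epigraph
    have e : D = {p : E × ℝ | p.1 ∈ Set.univ ∧ -c' + t * ‖p.1 - x0‖ < p.2} := by
      ext p; simp [hD]
    rw [e]; exact this
  have hdisj : Disjoint D C := by
    rw [Set.disjoint_left]
    rintro ⟨x, r⟩ hxD hxC
    have h1 := hxC t ht
    have h2 := hlip t ht x x0
    simp only [hD, Set.mem_ofPred_eq] at hxD h1
    linarith
  have hCne : C.Nonempty := by
    by_contra hne
    rw [Set.not_nonempty_iff_eq_empty] at hne
    obtain ⟨q, hq0⟩ := hq 0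
    have := cover hs hR hVc hlam 0 (m := q - 1) hq0 (by
      intro x r hxr
      have : (x, r) ∈ C := hxr
      rw [hne] at this
      exact absurd this (Set.notMem_empty _))
    linarith
  obtain ⟨f, w, hfD, hfC⟩ := geometric_hahn_banach_open hDconv hDo hCconv hdisj
  set l : E →L[ℝ] ℝ := f.comp (ContinuousLinearMap.inl ℝ E ℝ) with hldef
  set σ : ℝ := f (0, 1) with hσ
  have hf : ∀ x r, f (x, r) = l x + σ * r := by
    intro x r
    have : (x, r) = (x, (0 : ℝ)) + r • ((0 : E), (1 : ℝ)) := by simp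
    rw [this, map_add, map_smul, smul_eq_mul, mul_comm]
    rfl
  have hσ0 : σ < 0 := by
    by_contra hσn
    push Not at hσn
    rcases hσn.lt_or_eq with hpos | hzero
    · set r := max (-c' + 1) ((w - l x0) / σ) with hr
      have h1 := hfD (x0, r) (by
        have : -c' + 1 ≤ r := le_max_left _ _
        simp only [hD, Set.mem_ofPred_eq, sub_self, norm_zero, mul_zero]; linarith)
      rw [hf] at h1
      have h2 : (w - l x0) / σ ≤ r := le_max_right _ _
      rw [div_le_iff₀ hpos] at h2
      linarith
    · obtain ⟨⟨x, r⟩, hx⟩ := hCne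
      have h1 := hfC _ hx
      have h2 := hfD (x, -c' + t * ‖x - x0‖ + 1) (by
        show -c' + t * ‖x - x0‖ < -c' + t * ‖x - x0‖ + 1; linarith)
      rw [hf, ← hzero] at h1 h2
      linarith
  obtain ⟨q, hq1⟩ := hq (σ⁻¹ • l)
  have h1 := cover hs hR hVc hlam (σ⁻¹ • l) (m := w / σ) hq1 (by
    intro x r hxr
    have h2 := hfC (x, r) hxr
    rw [hf] at h2
    rw [_root_.smul_apply, smul_eq_mul, le_div_iff_of_neg hσ0]
    have : (σ⁻¹ * l x + r) * σ = l x + σ * r := by field_simp [hσ0.ne]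
    linarith)
  have h3 := hyp _ _ hq1
  rw [_root_.smul_apply, smul_eq_mul] at h3
  set r := (-c' - c) / 2 with hr
  have h4 := hfD (x0, r) (by
    simp only [hD, Set.mem_ofPred_eq, sub_self, norm_zero, mul_zero]; rw [hr]; linarith)
  rw [hf] at h4
  have h5 : w / σ < σ⁻¹ * l x0 + r := by
    rw [div_lt_iff_of_neg hσ0]
    have : (σ⁻¹ * l x0 + r) * σ = l x0 + σ * r := by field_simp [hσ0.ne]
    linarith
  rw [hr] at h5
  linarith

end Core4


section Core5

variable {H : Type} [NormedAddCommGroup H] [InnerProductSpace ℝ H] [CompleteSpace H]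
    [SecondCountableTopology H] [MeasurableSpace H] [BorelSpace H]
    {Ω : Type} [MeasurableSpace Ω] {P : Measure Ω} [IsProbabilityMeasure P]
    {S : H → H} {e : HilbertBasis ℕ ℝ H}
    {η : ℕ → Ω → H} {b : ℕ → ℝ} {ξ : ℕ → ℕ → Ω → ℝ} {p : ℕ → ℝ → ℝ} {K : Set H}

lemma shift_real {q : ℝ → ℝ} {L : ℝ≥0} (hq : LipschitzWith L q)
    (hsupp : Function.support q ⊆ Set.Icc (-1 : ℝ) 1) (τ : ℝ) (h : ℝ → ℝ≥0∞) (hm : Measurable h)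
    {m : ℝ≥0∞} (hb : ∀ x, h x ≤ m) :
    ∫⁻ x, h x ∂((volume : Measure ℝ).withDensity fun x => ENNReal.ofReal (q x)) ≤
    ∫⁻ x, h (x - τ) ∂((volume : Measure ℝ).withDensity fun x => ENNReal.ofReal (q x))
      + m * ENNReal.ofReal (2 * L * |τ|) := by
  have hqm : Measurable fun x => ENNReal.ofReal (q x) := hq.continuous.measurable.ennreal_ofReal
  rw [lintegral_withDensity_eq_lintegral_mul _ hqm hm,
    lintegral_withDensity_eq_lintegral_mul _ hqm (g := fun x => h (x - τ)) (hm.comp (measurable_id.sub_const τ))]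
  have h1 : ∫⁻ x, ((fun x => ENNReal.ofReal (q x)) * fun x => h (x - τ)) x
      = ∫⁻ x, ENNReal.ofReal (q (x + τ)) * h x := by
    rw [← lintegral_add_right_eq_self _ τ]
    simp
  rw [h1]
  have h2 : ∀ x, ((fun x => ENNReal.ofReal (q x)) * h) x ≤ ENNReal.ofReal (q (x + τ)) * h x +
      (Set.Icc (-1:ℝ) 1).indicator (fun _ => m * ENNReal.ofReal (L * |τ|)) x := by
    intro x
    by_cases hx : x ∈ Set.Icc (-1:ℝ) 1
    · rw [Set.indicator_of_mem hx]
      have h3 : q x ≤ q (x + τ) + L * |τ| := by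
        have := hq.dist_le_mul x (x + τ)
        rw [Real.dist_eq, Real.dist_eq] at this
        have h4 : x - (x + τ) = -τ := by ring
        rw [h4, abs_neg] at this
        linarith [le_abs_self (q x - q (x + τ))]
      calc ENNReal.ofReal (q x) * h x ≤ (ENNReal.ofReal (q (x + τ)) + ENNReal.ofReal (L * |τ|)) * h x := by
            gcongr
            exact (ENNReal.ofReal_le_ofReal h3).trans ENNReal.ofReal_add_le
        _ ≤ _ := by
            rw [add_mul]
            refine add_le_add le_rfl ?_
            rw [mul_comm m]
            exact mul_le_mul_right (hb x) _
    · have : q x = 0 := by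
        by_contra h; exact hx (hsupp h)
      simp [this]
  refine (lintegral_mono h2).trans ?_
  rw [lintegral_add_right _ (measurable_const.indicator measurableSet_Icc),
    lintegral_indicator measurableSet_Icc, setLIntegral_const, Real.volume_Icc, mul_assoc,
    ← ENNReal.ofReal_mul (by positivity)]
  refine add_le_add le_rfl (le_of_eq ?_)
  congr 2; ring

/-- sigma-algebra generated by a subfamily of the coordinates -/
@[reducible] def Ms (ξ : ℕ → ℕ → Ω → ℝ) (s : Set (ℕ × ℕ)) : MeasurableSpace Ω :=
  ⨆ i ∈ s, MeasurableSpace.comap (ξ i.1 i.2) inferInstance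

lemma Ms_meas {s : Set (ℕ × ℕ)} {j k : ℕ} (h : (j, k) ∈ s) :
    Measurable[Ms ξ s] (ξ j k) := by
  refine Measurable.mono (comap_measurable (ξ j k)) ?_ le_rfl
  exact le_iSup₂_of_le (f := fun i (_ : i ∈ s) => MeasurableSpace.comap (ξ i.1 i.2) inferInstance)
    (j, k) h le_rfl

lemma hasSum_seq (hD : CondD P e η b ξ p) (k : ℕ) (ω : Ω) :
    Tendsto (fun n => ∑ j ∈ Finset.range n, (b j * ξ j k ω) • (e j : H)) atTop (𝓝 (η k ω)) :=
  (hD.2.2.1 k ω).tendsto_sum_nat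

lemma eta_Ms (hD : CondD P e η b ξ p) {s : Set (ℕ × ℕ)} {k : ℕ} (h : ∀ j, (j, k) ∈ s) :
    Measurable[Ms ξ s] (η k) := by
  refine @measurable_of_tendsto_metrizable Ω H (Ms ξ s) _ _ _ _
    (fun n ω => ∑ j ∈ Finset.range n, (b j * ξ j k ω) • (e j : H)) _ (fun n => ?_)
    (tendsto_pi_nhds.2 fun ω => hasSum_seq hD k ω)
  refine Finset.measurable_sum _ fun j _ => ?_
  have := Ms_meas (ξ := ξ) (h j)
  exact (this.const_mul (b j)).smul_const _

lemma rest_Ms (hD : CondD P e η b ξ p) {s : Set (ℕ × ℕ)} {k i : ℕ} (h : ∀ j, j ≠ i → (j, k) ∈ s) :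
    Measurable[Ms ξ s] (fun ω => η k ω - (b i * ξ i k ω) • (e i : H)) := by
  refine @measurable_of_tendsto_metrizable Ω H (Ms ξ s) _ _ _ _
    (fun n ω => ∑ j ∈ (Finset.range n).erase i, (b j * ξ j k ω) • (e j : H)) _ (fun n => ?_)
    (tendsto_pi_nhds.2 fun ω => ?_)
  · refine Finset.measurable_sum _ fun j hj => ?_
    have := Ms_meas (ξ := ξ) (h j (Finset.ne_of_mem_erase hj))
    exact (this.const_mul (b j)).smul_const _
  · refine ((hasSum_seq hD k ω).sub_const ((b i * ξ i k ω) • (e i : H))).congr' ?_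
    filter_upwards [eventually_gt_atTop i] with n hn
    rw [← Finset.sum_erase_add _ _ (Finset.mem_range.2 hn)]
    simp

lemma Ms_indep (hD : CondD P e η b ξ p) {s t : Set (ℕ × ℕ)} (h : Disjoint s t) :
    Indep (Ms ξ s) (Ms ξ t) P := by
  have h1 : iIndep (fun i : ℕ × ℕ => MeasurableSpace.comap (ξ i.1 i.2) inferInstance) P :=
    (iIndepFun_iff_iIndep _ _ _).1 hD.2.2.2.2.1
  have h2 : ∀ i : ℕ × ℕ, MeasurableSpace.comap (ξ i.1 i.2) inferInstance ≤ (inferInstance : MeasurableSpace Ω) :=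
    fun i => (hD.2.2.2.1 i.1 i.2).comap_le
  unfold Ms
  exact indep_iSup_of_disjoint h2 h1 h

lemma indepFun_of_Ms (hD : CondD P e η b ξ p) {s t : Set (ℕ × ℕ)} (h : Disjoint s t)
    {α β : Type*} [MeasurableSpace α] [MeasurableSpace β] {f : Ω → α} {g : Ω → β}
    (hf : Measurable[Ms ξ s] f) (hg : Measurable[Ms ξ t] g) : IndepFun f g P := by
  rw [IndepFun_iff_Indep]
  exact indep_of_indep_of_le_left (indep_of_indep_of_le_right (Ms_indep hD h) hg.comap_le) hf.comap_le

lemma shift_coord (hD : CondD P e η b ξ p) (hηmeas : ∀ k, Measurable (η k)) (hb : ∀ j, b j ≠ 0)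
    (j : ℕ) : ∃ C : ℝ, 0 ≤ C ∧ ∀ s : ℝ, ∀ f : H → ℝ≥0∞, Measurable f → ∀ m : ℝ≥0∞, (∀ y, f y ≤ m) →
      ∫⁻ y, f y ∂(Measure.map (η 1) P) ≤ ∫⁻ y, f (y - s • (e j : H)) ∂(Measure.map (η 1) P)
        + m * ENNReal.ofReal (C * |s|) := by
  obtain ⟨L, hL⟩ := hD.2.2.2.2.2.2.1 j
  refine ⟨2 * L * |b j|⁻¹, by positivity, fun s f hf m hm => ?_⟩
  set X := ξ j 1 with hX
  set Y := fun ω => η 1 ω - (b j * ξ j 1 ω) • (e j : H) with hY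
  have hXm : Measurable X := hD.2.2.2.1 j 1
  have hYm : Measurable Y := (hηmeas 1).sub ((hXm.const_mul (b j)).smul_const _)
  have hind : IndepFun X Y P := indepFun_of_Ms hD (s := {(j, 1)}) (t := {i | i.1 ≠ j})
    (by simp) (Ms_meas (by simp)) (rest_Ms hD (by simp))
  have hmap := (indepFun_iff_map_prod_eq_prod_map_map hXm.aemeasurable hYm.aemeasurable).1 hind
  have hη : η 1 = (fun q : ℝ × H => (b j * q.1) • (e j : H) + q.2) ∘ fun ω => (X ω, Y ω) := by
    ext ω; simp [hX, hY]
  have hcomb : Measurable (fun q : ℝ × H => (b j * q.1) • (e j : H) + q.2) :=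
    ((measurable_fst.const_mul _).smul_const _).add measurable_snd
  have hμ : Measure.map (η 1) P = Measure.map (fun q : ℝ × H => (b j * q.1) • (e j : H) + q.2)
      ((Measure.map X P).prod (Measure.map Y P)) := by
    rw [← hmap, Measure.map_map hcomb (hXm.prodMk hYm)]
    rw [← hη]
  have : IsProbabilityMeasure (Measure.map X P) := Measure.isProbabilityMeasure_map hXm.aemeasurable
  have : IsProbabilityMeasure (Measure.map Y P) := Measure.isProbabilityMeasure_map hYm.aemeasurable
  have key : ∀ g : H → ℝ≥0∞, Measurable g → ∫⁻ y, g y ∂(Measure.map (η 1) P) =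
      ∫⁻ z, ∫⁻ x, g ((b j * x) • (e j : H) + z) ∂(Measure.map X P) ∂(Measure.map Y P) := by
    intro g hg
    rw [hμ, lintegral_map hg hcomb, lintegral_prod_symm' (fun q : ℝ × H => g ((b j * q.1) • (e j : H) + q.2)) (hg.comp hcomb)]
  rw [key f hf, key (fun y => f (y - s • (e j : H))) (hf.comp (measurable_id.sub_const _))]
  have hle : ∀ z, ∫⁻ x, f ((b j * x) • (e j : H) + z) ∂(Measure.map X P) ≤
      ∫⁻ x, f ((b j * x) • (e j : H) + z - s • (e j : H)) ∂(Measure.map X P)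
      + m * ENNReal.ofReal (2 * L * |b j|⁻¹ * |s|) := by
    intro z
    have hm1 : Measurable fun x : ℝ => (b j * x) • (e j : H) + z :=
      ((measurable_id.const_mul _).smul_const _).add_const _
    have := shift_real hL (hD.2.2.2.2.2.2.2.2 j) (s / b j) (fun x => f ((b j * x) • (e j : H) + z))
      (hf.comp hm1) (fun x => hm _)
    rw [hX, hD.2.2.2.2.2.1 j 1]
    refine this.trans (le_of_eq ?_)
    congr 1
    · refine lintegral_congr fun x => ?_
      congr 1
      have : b j * (x - s / b j) = b j * x - s := by have := hb j; field_simp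
      rw [this, sub_smul]; abel
    · congr 2
      rw [abs_div]; ring
  refine (lintegral_mono hle).trans ?_
  rw [lintegral_add_right _ measurable_const, lintegral_const, measure_univ, mul_one]

lemma shift_proj (hD : CondD P e η b ξ p) (hηmeas : ∀ k, Measurable (η k)) (hb : ∀ j, b j ≠ 0)
    (N : ℕ) : ∃ C : ℝ, 0 ≤ C ∧ ∀ w : H, ∀ f : H → ℝ≥0∞, Measurable f → ∀ m : ℝ≥0∞, (∀ y, f y ≤ m) →
      ∫⁻ y, f y ∂(Measure.map (η 1) P) ≤ ∫⁻ y, f (y - projB e N w) ∂(Measure.map (η 1) P)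
        + m * ENNReal.ofReal (C * ‖w‖) := by
  induction N with
  | zero => exact ⟨0, le_rfl, fun w f hf m hm => by simp [projB]⟩
  | succ N ih =>
    obtain ⟨C, hC0, hC⟩ := ih
    obtain ⟨C', hC0', hC'⟩ := shift_coord hD hηmeas hb N
    refine ⟨C + C', by positivity, fun w f hf m hm => ?_⟩
    refine (hC w f hf m hm).trans ?_
    have h1 := hC' (e.repr w N) (fun y => f (y - projB e N w)) (hf.comp (measurable_id.sub_const _))
      m (fun y => hm _)
    have h2 : |e.repr w N| ≤ ‖w‖ := by
      have := lp.norm_apply_le_norm (p := 2) (by norm_num) (e.repr w) N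
      rwa [LinearIsometryEquiv.norm_map] at this
    have h3 : ∀ y : H, y - projB e (N + 1) w = y - e.repr w N • (e N : H) - projB e N w := by
      intro y; simp only [projB, Finset.sum_range_succ]; abel
    simp only [h3]
    calc _ ≤ (_ + m * ENNReal.ofReal (C' * |e.repr w N|)) + m * ENNReal.ofReal (C * ‖w‖) := by
          gcongr
      _ ≤ (_ + m * ENNReal.ofReal (C' * ‖w‖)) + m * ENNReal.ofReal (C * ‖w‖) := by gcongr
      _ = _ := by
        rw [add_assoc, ← mul_add, ← ENNReal.ofReal_add (by positivity) (by positivity), add_mul, add_comm (C * _)]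

end Core5


section Core6

variable {H : Type} [NormedAddCommGroup H] [InnerProductSpace ℝ H] [CompleteSpace H]
    [SecondCountableTopology H] [MeasurableSpace H] [BorelSpace H]
    {Ω : Type} [MeasurableSpace Ω] {P : Measure Ω} [IsProbabilityMeasure P]
    {S : H → H} {e : HilbertBasis ℕ ℝ H}
    {η : ℕ → Ω → H} {b : ℕ → ℝ} {ξ : ℕ → ℕ → Ω → ℝ} {p : ℕ → ℝ → ℝ} {K : Set H}

lemma eta_law (hD : CondD P e η b ξ p) (k : ℕ) :
    Measure.map (η k) P = Measure.map (η 1) P := by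
  set Φ : (ℕ → ℝ) → H := fun x =>
    limUnder atTop (fun n => ∑ j ∈ Finset.range n, (b j * x j) • (e j : H)) with hΦ
  have hΦm : Measurable Φ := by
    refine (StronglyMeasurable.limUnder
      (f := fun (n : ℕ) (x : ℕ → ℝ) => ∑ j ∈ Finset.range n, (b j * x j) • (e j : H))
      fun n => ?_).measurable
    refine Measurable.stronglyMeasurable (Finset.measurable_sum _ fun j _ => ?_)
    exact ((measurable_pi_apply j).const_mul _).smul_const _
  have hX : ∀ k, Measurable fun ω j => ξ j k ω := fun k => measurable_pi_iff.2 fun j => hD.2.2.2.1 j k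
  have h1 : ∀ k, η k = Φ ∘ fun ω j => ξ j k ω := by
    intro k; ext ω
    exact (hasSum_seq hD k ω).limUnder_eq.symm
  have h2 : ∀ k, Measure.map (fun ω j => ξ j k ω) P =
      Measure.infinitePi (fun j => Measure.map (ξ j 1) P) := by
    intro k
    have hi : iIndepFun (fun j => ξ j k) P :=
      hD.2.2.2.2.1.precomp (g := fun j => (j, k)) (fun i j h => (Prod.ext_iff.1 h).1)
    have := hi.map_fun_eq_infinitePi_map (fun j => hD.2.2.2.1 j k)
    rw [this]
    congr 1
    ext1 j
    rw [hD.2.2.2.2.2.1, hD.2.2.2.2.2.1]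
  rw [h1 k, h1 1, ← Measure.map_map hΦm (hX k), ← Measure.map_map hΦm (hX 1), h2, h2]

lemma xi_bdd (hD : CondD P e η b ξ p) (j k : ℕ) : ∀ᵐ ω ∂P, |ξ j k ω| ≤ 1 := by
  have h1 : ∀ᵐ x ∂(Measure.map (ξ j k) P), x ∈ Set.Icc (-1 : ℝ) 1 := by
    obtain ⟨L, hL⟩ := hD.2.2.2.2.2.2.1 j
    have hpm : Measurable fun x => ENNReal.ofReal (p j x) := hL.continuous.measurable.ennreal_ofReal
    rw [hD.2.2.2.2.2.1, ae_iff, withDensity_apply_eq_zero hpm]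
    convert measure_empty (μ := (volume : Measure ℝ))
    ext x
    simp only [Set.mem_inter_iff, Set.mem_ofPred_eq, Set.mem_empty_iff_false, iff_false, not_and]
    intro h h'
    apply h'
    apply hD.2.2.2.2.2.2.2.2 j
    intro h0; apply h; simp [h0]
  have := ae_of_ae_map (hD.2.2.2.1 j k).aemeasurable h1
  filter_upwards [this] with ω h
  exact abs_le.2 h

lemma xi_pos (hD : CondD P e η b ξ p) (j k : ℕ) {c : ℝ} (hc : 0 < c) :
    P (ξ j k ⁻¹' (Metric.ball 0 c)) ≠ 0 := by
  obtain ⟨L, hL⟩ := hD.2.2.2.2.2.2.1 j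
  have hpm : Measurable fun x => ENNReal.ofReal (p j x) := hL.continuous.measurable.ennreal_ofReal
  rw [← Measure.map_apply (hD.2.2.2.1 j k) Metric.isOpen_ball.measurableSet, hD.2.2.2.2.2.1, Ne,
    withDensity_apply_eq_zero hpm]
  have ho : IsOpen ({x : ℝ | 0 < p j x} ∩ Metric.ball 0 c) :=
    (isOpen_lt continuous_const hL.continuous).inter Metric.isOpen_ball
  have := ho.measure_pos volume ⟨0, hD.2.2.2.2.2.2.2.1 j, by simpa using hc⟩
  convert this.ne' using 3
  simp

lemma eta_small (hD : CondD P e η b ξ p) {ε : ℝ} (hε : 0 < ε) (k : ℕ) :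
    P {ω | ‖η k ω‖ < ε} ≠ 0 := by
  set T := ∑' j, (b j) ^ 2 with hT
  have hsum := hD.2.1
  have hT0 : 0 ≤ T := tsum_nonneg fun j => sq_nonneg _
  have hlim := hsum.hasSum.tendsto_sum_nat
  obtain ⟨N, hN⟩ := (hlim.eventually (lt_mem_nhds (show T - ε ^ 2 / 4 < T by linarith [sq_pos_of_pos hε]))).exists
  set c := min 1 (ε ^ 2 / (4 * (T + 1))) with hc
  have hc0 : 0 < c := lt_min one_pos (by positivity)
  have hcT : c ^ 2 * T ≤ ε ^ 2 / 4 := by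
    have h1 : c ≤ 1 := min_le_left _ _
    have h2 : c ≤ ε ^ 2 / (4 * (T + 1)) := min_le_right _ _
    rw [le_div_iff₀ (by positivity)] at h2
    nlinarith
  have hpos : P (⋂ j ∈ Finset.range N, ξ j k ⁻¹' (Metric.ball 0 c)) ≠ 0 := by
    have hi : iIndepFun (fun j => ξ j k) P :=
      hD.2.2.2.2.1.precomp (g := fun j => (j, k)) (fun i j h => (Prod.ext_iff.1 h).1)
    rw [hi.measure_inter_preimage_eq_mul (Finset.range N) (sets := fun _ => Metric.ball 0 c)
      (fun _ _ => Metric.isOpen_ball.measurableSet)]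
    exact Finset.prod_ne_zero_iff.2 fun j _ => xi_pos hD j k hc0
  intro h0
  apply hpos
  have hall : ∀ᵐ ω ∂P, ∀ j, |ξ j k ω| ≤ 1 := ae_all_iff.2 fun j => xi_bdd hD j k
  have h00 : ∀ᵐ ω ∂P, ¬ ‖η k ω‖ < ε := by rw [ae_iff]; simpa using h0
  suffices h : ∀ᵐ ω ∂P, ω ∉ (⋂ j ∈ Finset.range N, ξ j k ⁻¹' (Metric.ball 0 c)) by
    rw [ae_iff] at h; simp only [not_not] at h; exact h
  filter_upwards [hall, h00] with ω h1 h2 h3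
  apply h2
  have hbound : ∀ n, ‖∑ j ∈ Finset.range n, (b j * ξ j k ω) • (e j : H)‖ ^ 2 ≤ ε ^ 2 / 2 := by
    intro n
    have : ‖∑ j ∈ Finset.range n, (b j * ξ j k ω) • (e j : H)‖ ^ 2 =
        ∑ j ∈ Finset.range n, (b j * ξ j k ω) ^ 2 := by
      rw [← real_inner_self_eq_norm_sq, e.orthonormal.inner_sum]
      simp [sq]
    rw [this]
    have h4 : ∀ j ∈ Finset.range n, (b j * ξ j k ω) ^ 2 ≤
        c ^ 2 * (b j) ^ 2 + (if j < N then 0 else (b j) ^ 2) := by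
      intro j _
      rw [mul_pow]
      split_ifs with hj
      · have h5 := Set.mem_iInter₂.1 h3 j (Finset.mem_range.2 hj)
        rw [Set.mem_preimage, mem_ball_zero_iff, Real.norm_eq_abs] at h5
        have h6 : (ξ j k ω) ^ 2 ≤ c ^ 2 := by
          rw [← sq_abs]; gcongr
        nlinarith [sq_nonneg (b j)]
      · have h6 : (ξ j k ω) ^ 2 ≤ 1 := by
          rw [← sq_abs]; have := h1 j; nlinarith [abs_nonneg (ξ j k ω)]
        nlinarith [sq_nonneg (b j), mul_nonneg (sq_nonneg c) (sq_nonneg (b j))]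
    refine (Finset.sum_le_sum h4).trans ?_
    rw [Finset.sum_add_distrib, ← Finset.mul_sum]
    have h7 : ∑ j ∈ Finset.range n, (b j) ^ 2 ≤ T := hsum.sum_le_tsum _ fun _ _ => sq_nonneg _
    have h8 : ∑ j ∈ Finset.range n, (if j < N then 0 else (b j) ^ 2) +
        ∑ j ∈ Finset.range N, (b j) ^ 2 ≤ T := by
      have : ∑ j ∈ Finset.range n, (if j < N then 0 else (b j) ^ 2) =
          ∑ j ∈ (Finset.range n).filter (fun j => ¬ j < N), (b j) ^ 2 := by
        rw [Finset.sum_filter]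
        refine Finset.sum_congr rfl fun j _ => ?_
        by_cases h : j < N <;> simp [h]
      rw [this, ← Finset.sum_union]
      · exact hsum.sum_le_tsum _ fun _ _ => sq_nonneg _
      · rw [Finset.disjoint_left]; intro j hj hj'
        simp at hj hj'; omega
    nlinarith [sq_nonneg c]
  have hlim2 : ‖η k ω‖ ^ 2 ≤ ε ^ 2 / 2 :=
    le_of_tendsto ((hasSum_seq hD k ω).norm.pow 2) (Eventually.of_forall hbound)
  nlinarith [norm_nonneg (η k ω)]

lemma zero_mem_K (hD : CondD P e η b ξ p) (hηmeas : ∀ k, Measurable (η k))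
    (hK : K = msupp (Measure.map (η 1) P)) : (0 : H) ∈ K := by
  rw [hK]
  intro U hU
  obtain ⟨ε, hε, hεU⟩ := Metric.mem_nhds_iff.1 hU
  refine lt_of_lt_of_le ?_ (measure_mono hεU)
  rw [Measure.map_apply (hηmeas 1) Metric.isOpen_ball.measurableSet]
  refine pos_iff_ne_zero.2 ?_
  convert eta_small hD hε 1 using 3
  ext ω; simp

end Core6


section Core7

variable {H : Type} [NormedAddCommGroup H] [InnerProductSpace ℝ H] [CompleteSpace H]
    [SecondCountableTopology H] [MeasurableSpace H] [BorelSpace H]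
    {Ω : Type} [MeasurableSpace Ω] {P : Measure Ω} [IsProbabilityMeasure P]
    {S : H → H} {e : HilbertBasis ℕ ℝ H}
    {η : ℕ → Ω → H} {b : ℕ → ℝ} {ξ : ℕ → ℕ → Ω → ℝ} {p : ℕ → ℝ → ℝ} {K : Set H}

lemma attain_mono {B B' : Set H} (h : B ⊆ B') (n : ℕ) : attain S K B n ⊆ attain S K B' n := by
  induction n with
  | zero => exact h
  | succ n ih => exact Set.add_subset_add (Set.image_mono ih) le_rfl

lemma attain_compact (hS : Continuous S) (hK : IsCompact K) (n : ℕ) :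
    IsCompact (attain S K {0} n) := by
  induction n with
  | zero => exact isCompact_singleton
  | succ n ih => exact (ih.image hS).add hK

lemma attain_bdd (hS : Continuous S) (hK : IsCompact K) (hB : CondB S K) :
    ∃ R : ℝ, 0 < R ∧ ∀ n, attain S K {0} n ⊆ Metric.closedBall (0 : H) R := by
  obtain ⟨ρ, hρ, k₀, -, h⟩ := hB
  have h1 : Bornology.IsBounded (⋃ n ∈ Finset.range (k₀ 0), attain S K {(0 : H)} n) := by
    rw [Bornology.isBounded_biUnion_finset]
    exact fun n _ => (attain_compact hS hK n).isBounded
  obtain ⟨R, hR⟩ := h1.subset_closedBall 0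
  refine ⟨max R ρ, lt_max_of_lt_right hρ, fun n => ?_⟩
  by_cases hn : n < k₀ 0
  · refine Set.Subset.trans ?_ (hR.trans (Metric.closedBall_subset_closedBall (le_max_left _ _)))
    exact Set.subset_biUnion_of_mem (u := fun n => attain S K {(0 : H)} n)
      (Finset.mem_coe.2 (Finset.mem_range.2 hn))
  · refine Set.Subset.trans ?_ ((h 0 le_rfl n (not_lt.1 hn)).trans (Metric.closedBall_subset_closedBall (le_max_right _ _)))
    exact attain_mono (by simp) n

lemma image_tb (hA : CondA S) (hC : CondC S e) {R : ℝ} (hR : 0 < R) :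
    TotallyBounded (S '' Metric.closedBall (0 : H) R) := by
  obtain ⟨C, hC0, -, -, -, -, -, hLip, -⟩ := hA.2 R (R / 2) (by linarith) (by linarith)
  obtain ⟨γ, hγ0, -, hγ, hsq⟩ := hC R hR
  rw [Metric.totallyBounded_iff]
  intro ε hε
  obtain ⟨N, hN⟩ := (hγ.eventually (gt_mem_nhds (show (0 : ℝ) < ε / (2 * R) by positivity))).exists
  set ψ : (Fin N → ℝ) → H := fun x => ∑ j : Fin N, x j • (e j : H) with hψ
  have hψc : Continuous ψ := by fun_prop
  have hbox : IsCompact (Set.pi Set.univ fun _ : Fin N => Set.Icc (-(C * R)) (C * R)) :=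
    isCompact_univ_pi fun _ => isCompact_Icc
  obtain ⟨t, htf, ht⟩ := Metric.totallyBounded_iff.1 (hbox.image hψc).totallyBounded (ε / 2) (by positivity)
  refine ⟨(fun y => S 0 + y) '' t, htf.image _, ?_⟩
  rintro _ ⟨u, hu, rfl⟩
  have h0 : (0 : H) ∈ Metric.closedBall (0 : H) R := by simp [hR.le]
  have h1 := hsq N u hu 0 h0
  have h2 := hLip u hu 0 h0
  have hu' : ‖u - 0‖ ≤ R := by simpa using hu
  have h3 : projB e N (S u - S 0) ∈ ψ '' (Set.pi Set.univ fun _ : Fin N => Set.Icc (-(C * R)) (C * R)) := by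
    refine ⟨fun j => e.repr (S u - S 0) j, fun j _ => ?_, ?_⟩
    · have := lp.norm_apply_le_norm (p := 2) (by norm_num) (e.repr (S u - S 0)) j
      rw [LinearIsometryEquiv.norm_map, Real.norm_eq_abs] at this
      exact abs_le.1 (this.trans (h2.trans (by gcongr)))
    · simp only [hψ, projB]
      rw [Finset.sum_range]
  obtain ⟨y, hy, hyt⟩ := Set.mem_iUnion₂.1 (ht h3)
  refine Set.mem_iUnion₂.2 ⟨S 0 + y, ⟨y, hy, rfl⟩, ?_⟩
  rw [Metric.mem_ball, dist_eq_norm] at hyt ⊢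
  have h4 : S u - (S 0 + y) = (S u - S 0 - projB e N (S u - S 0)) + (projB e N (S u - S 0) - y) := by abel
  rw [h4]
  refine (norm_add_le _ _).trans_lt ?_
  have h5 : γ N * ‖u - 0‖ ≤ ε / (2 * R) * R := by
    gcongr
  have h6 : ε / (2 * R) * R = ε / 2 := by field_simp
  linarith

lemma A_compact (hA : CondA S) (hB : CondB S K) (hC : CondC S e) (hK : IsCompact K) :
    IsCompact (attainDom S K {0}) := by
  have hS := hA.1.continuous
  obtain ⟨R, hR, h⟩ := attain_bdd hS hK hB
  have h1 : IsCompact ({0} ∪ (closure (S '' Metric.closedBall (0 : H) R) + K)) :=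
    isCompact_singleton.union ((TotallyBounded.isCompact_of_isClosed (image_tb hA hC hR).closure isClosed_closure).add hK)
  refine h1.of_isClosed_subset isClosed_closure (closure_minimal ?_ h1.isClosed)
  refine Set.iUnion_subset fun n => ?_
  cases n with
  | zero => exact Set.subset_union_left
  | succ n =>
    refine Set.Subset.trans ?_ Set.subset_union_right
    exact Set.add_subset_add ((Set.image_mono (h n)).trans subset_closure) le_rfl

lemma A_inv (hS : Continuous S) : ∀ u ∈ attainDom S K {0}, ∀ y ∈ K, S u + y ∈ attainDom S K {0} := by
  intro u hu y hy
  refine map_mem_closure (f := fun v => S v + y) (by fun_prop) hu ?_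
  intro v hv
  obtain ⟨n, hn⟩ := Set.mem_iUnion.1 hv
  exact Set.mem_iUnion.2 ⟨n + 1, Set.add_mem_add ⟨v, hn, rfl⟩ hy⟩

variable {μ : Measure H}

lemma Pop_mono {g g' : H → ℝ≥0∞} (h : ∀ u, g u ≤ g' u) (n : ℕ) (u : H) :
    (Pop S μ)^[n] g u ≤ (Pop S μ)^[n] g' u := by
  induction n generalizing u with
  | zero => exact h u
  | succ n ih =>
    rw [Function.iterate_succ_apply', Function.iterate_succ_apply']
    exact lintegral_mono fun y => ih _

lemma Pop_const (c : ℝ≥0∞) (g : H → ℝ≥0∞) (n : ℕ) (u : H) :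
    c * (Pop S μ)^[n] g u ≤ (Pop S μ)^[n] (fun v => c * g v) u := by
  induction n generalizing u with
  | zero => exact le_rfl
  | succ n ih =>
    rw [Function.iterate_succ_apply', Function.iterate_succ_apply']
    exact (lintegral_const_mul_le _ _).trans (lintegral_mono fun y => ih _)

lemma reach (hS : Continuous S) (hK : K = msupp μ) {z0 : H} (l : ℕ) :
    ∀ v ∈ attain S K {z0} l, ∀ δ > 0, ∃ ε > 0, ∃ p : ℝ≥0∞, 0 < p ∧ ∀ u ∈ Metric.ball z0 ε,
      p ≤ (Pop S μ)^[l] ((Metric.ball v δ).indicator 1) u := by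
  induction l with
  | zero =>
    rintro v rfl δ hδ
    refine ⟨δ, hδ, 1, one_pos, fun u hu => ?_⟩
    simp [Set.indicator_of_mem hu]
  | succ l ih =>
    rintro _ ⟨_, ⟨v', hv', rfl⟩, y, hy, rfl⟩ δ hδ
    obtain ⟨ε1, hε1, h1⟩ := Metric.continuousAt_iff.1 (hS.continuousAt (x := v')) (δ / 2) (by linarith)
    obtain ⟨ε, hε, q, hq, h2⟩ := ih v' hv' ε1 hε1
    have hp1 : 0 < μ (Metric.ball y (δ / 2)) := by
      rw [hK] at hy
      exact hy _ (Metric.ball_mem_nhds _ (by linarith))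
    refine ⟨ε, hε, μ (Metric.ball y (δ / 2)) * q, ENNReal.mul_pos hp1.ne' hq.ne', fun u hu => ?_⟩
    rw [Function.iterate_succ_apply]
    refine (mul_le_mul_right (h2 u hu) _).trans ((Pop_const _ _ l u).trans (Pop_mono (fun u' => ?_) l u))
    by_cases hu' : u' ∈ Metric.ball v' ε1
    · rw [Set.indicator_of_mem hu', Pi.one_apply, mul_one, ← lintegral_indicator_one Metric.isOpen_ball.measurableSet]
      refine lintegral_mono fun y' => ?_
      by_cases hy' : y' ∈ Metric.ball y (δ / 2)
      · have : S u' + y' ∈ Metric.ball (S v' + y) δ := by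
          have h3 := h1 hu'
          rw [Metric.mem_ball, dist_eq_norm] at hy' ⊢
          rw [dist_eq_norm] at h3
          rw [add_sub_add_comm]
          refine (norm_add_le _ _).trans_lt (by linarith)
        simp only [Set.indicator_of_mem hy']
        simp only [Set.indicator_of_mem this]
        exact le_rfl
      · simp [Set.indicator_of_notMem hy']
    · simp [Set.indicator_of_notMem hu']

lemma iter_attain (h0 : (0 : H) ∈ K) (u : H) (n : ℕ) : S^[n] u ∈ attain S K {u} n := by
  induction n with
  | zero => rfl
  | succ n ih =>
    rw [Function.iterate_succ_apply']
    exact ⟨_, ⟨_, ih, rfl⟩, 0, h0, by simp⟩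

lemma iter_small (hA : CondA S) {R ε : ℝ} (hR : 0 < R) (hε : 0 < ε) :
    ∃ n, ∀ u ∈ Metric.closedBall (0 : H) R, ‖S^[n] u‖ < ε := by
  set r := min (ε / 2) (R / 2) with hr
  have hr0 : 0 < r := lt_min (by linarith) (by linarith)
  have hr1 : r ≤ ε / 2 := min_le_left _ _
  have hr2 : r ≤ R / 2 := min_le_right _ _
  obtain ⟨C, -, a, ha0, ha1, n₀, -, -, h⟩ := hA.2 R r hr0 (by linarith)
  have h1 : ∀ i : ℕ, ∀ u ∈ Metric.closedBall (0 : H) R, ‖S^[n₀ * i] u‖ ≤ max (a ^ i * R) r := by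
    intro i u hu
    induction i with
    | zero => simp; left; simpa using hu
    | succ i ih =>
      have hle : max (a ^ i * R) r ≤ R := by
        apply max_le
        · exact mul_le_of_le_one_left hR.le (pow_le_one₀ ha0.le ha1.le)
        · linarith
      have h2 := h (S^[n₀ * i] u) (by simpa using ih.trans hle) n₀ le_rfl
      rw [← Function.iterate_add_apply, show n₀ + n₀ * i = n₀ * (i + 1) by ring] at h2
      refine h2.trans (max_le ?_ (le_max_right _ _))
      have h3 : a * ‖S^[n₀ * i] u‖ ≤ a * max (a ^ i * R) r := by gcongr
      refine h3.trans ?_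
      rw [mul_max_of_nonneg _ _ ha0.le]
      refine max_le_max (by rw [pow_succ]; linarith) ?_
      nlinarith
  have hl : Tendsto (fun i : ℕ => a ^ i * R) atTop (𝓝 0) := by
    simpa using (tendsto_pow_atTop_nhds_zero_of_lt_one ha0.le ha1).mul_const R
  obtain ⟨i, hi⟩ := (hl.eventually (gt_mem_nhds hε)).exists
  exact ⟨n₀ * i, fun u hu => (h1 i u hu).trans_lt (max_lt hi (by linarith))⟩

theorem sys_of (hηmeas : ∀ k, Measurable (η k))
    (hK : K = msupp (Measure.map (η 1) P)) (hKcomp : IsCompact K)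
    (hA : CondA S) (hB : CondB S K) (hC : CondC S e) (hD : CondD P e η b ξ p)
    (hb : ∀ j, b j ≠ 0) : Sys S (Measure.map (η 1) P) (attainDom S K {0}) K := by
  have hS := hA.1.continuous
  have h0K := zero_mem_K hD hηmeas hK
  have hAc := A_compact hA hB hC hKcomp
  obtain ⟨R', hR'⟩ := hAc.isBounded.subset_closedBall 0
  set R := max R' 1 with hRdef
  have hR : 0 < R := lt_max_of_lt_right one_pos
  have hAR : attainDom S K {0} ⊆ Metric.closedBall (0 : H) R :=
    hR'.trans (Metric.closedBall_subset_closedBall (le_max_left _ _))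
  refine ⟨hS, hKcomp.measurableSet, ?_, A_inv hS, hAc, ⟨0, subset_closure (Set.mem_iUnion.2 ⟨0, rfl⟩)⟩, ?_, ?_⟩
  · have : K = (Measure.map (η 1) P).support := by
      rw [hK]; ext x; rw [Measure.mem_support_iff_forall]; rfl
    rw [this]
    exact Measure.support_mem_ae
  · intro γ hγ
    obtain ⟨C, hC0, -, -, -, -, -, hLip, -⟩ := hA.2 R (R / 2) (by linarith) (by linarith)
    obtain ⟨g, hg0, -, hg, hsq⟩ := hC R hR
    obtain ⟨N, hN⟩ := (hg.eventually (gt_mem_nhds hγ)).exists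
    obtain ⟨C', hC0', hC'⟩ := shift_proj hD hηmeas hb N
    refine ⟨C' * C, by positivity, fun u hu v hv => ⟨projB e N (S u - S v), ?_, ?_⟩⟩
    · exact (hsq N u (hAR hu) v (hAR hv)).trans (by gcongr)
    · intro f hf m hm
      refine (hC' (S u - S v) f hf m hm).trans ?_
      have := hLip u (hAR hu) v (hAR hv)
      rw [mul_assoc]
      gcongr
  · intro δ hδ v hv
    obtain ⟨v', hv', hvv'⟩ := Metric.mem_closure_iff.1 hv (δ / 2) (by linarith)
    obtain ⟨l, hl⟩ := Set.mem_iUnion.1 hv'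
    obtain ⟨ε, hε, q, hq, h1⟩ := reach hS hK l v' hl (δ / 2) (by linarith)
    obtain ⟨n, hn⟩ := iter_small hA hR hε
    have h2 : ∀ u : attainDom S K {(0 : H)}, ∃ ε' > 0, ∃ p : ℝ≥0∞, 0 < p ∧ ∀ w ∈ Metric.ball (u : H) ε',
        p ≤ (Pop S (Measure.map (η 1) P))^[n] ((Metric.ball 0 ε).indicator 1) w := by
      intro u
      have hu := hn u (hAR u.2)
      obtain ⟨ε', hε', q', hq', h3⟩ := reach hS hK n (S^[n] u) (iter_attain h0K u n) (ε - ‖S^[n] (u : H)‖) (by linarith)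
      refine ⟨ε', hε', q', hq', fun w hw => (h3 w hw).trans (Pop_mono (fun x => ?_) n w)⟩
      refine Set.indicator_le_indicator_of_subset ?_ (fun _ => zero_le) x
      apply Metric.ball_subset_ball'
      rw [dist_zero_right]; linarith
    choose ε' hε' q' hq' h3 using h2
    obtain ⟨I, hI⟩ := hAc.elim_finite_subcover (fun u : attainDom S K {(0 : H)} => Metric.ball (u : H) (ε' u))
      (fun u => Metric.isOpen_ball) (fun u hu => Set.mem_iUnion.2 ⟨⟨u, hu⟩, Metric.mem_ball_self (hε' _)⟩)
    refine ⟨n + l, q * I.inf q', ?_, fun u hu => ?_⟩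
    · refine ENNReal.mul_pos hq.ne' (ne_of_gt ?_)
      rw [Finset.lt_inf_iff (by simp)]
      exact fun i _ => hq' i
    · obtain ⟨i, hi, hui⟩ := Set.mem_iUnion₂.1 (hI hu)
      rw [Function.iterate_add_apply]
      calc q * I.inf q' ≤ q * q' i := mul_le_mul_right (Finset.inf_le hi) _
        _ ≤ q * (Pop S (Measure.map (η 1) P))^[n] ((Metric.ball 0 ε).indicator 1) u :=
            mul_le_mul_right (h3 i u hui) _
        _ ≤ _ := (Pop_const _ _ n u).trans (Pop_mono (fun w => ?_) n u)
      by_cases hw : w ∈ Metric.ball (0 : H) ε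
      · rw [Set.indicator_of_mem hw, Pi.one_apply, mul_one]
        refine (h1 w hw).trans (Pop_mono (fun x => ?_) l w)
        refine Set.indicator_le_indicator_of_subset ?_ (fun _ => zero_le) x
        apply Metric.ball_subset_ball'
        rw [dist_comm]; linarith
      · simp [Set.indicator_of_notMem hw]

end Core7


section Core8

variable {H : Type} [NormedAddCommGroup H] [InnerProductSpace ℝ H] [CompleteSpace H]
    [SecondCountableTopology H] [MeasurableSpace H] [BorelSpace H]
    {Ω : Type} [MeasurableSpace Ω] {P : Measure Ω} [IsProbabilityMeasure P]
    {S : H → H} {e : HilbertBasis ℕ ℝ H}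
    {η : ℕ → Ω → H} {b : ℕ → ℝ} {ξ : ℕ → ℕ → Ω → ℝ} {p : ℕ → ℝ → ℝ} {K : Set H}
    {E : Type} [NormedAddCommGroup E] [MeasurableSpace E] [BorelSpace E]
    [SecondCountableTopology E] {u₀ : Ω → H}

lemma traj_meas {Ω' : Type} [MeasurableSpace Ω'] {η : ℕ → Ω' → H} {u₀ : Ω' → H} (hS : Continuous S)
    (hη : ∀ k, Measurable (η k)) (hu : Measurable u₀) (n : ℕ) : Measurable (traj S η u₀ n) := by
  induction n with
  | zero => exact hu
  | succ n ih => exact (hS.measurable.comp ih).add (hη _)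

lemma indep3 {α β γ : Type} [MeasurableSpace α] [MeasurableSpace β] [MeasurableSpace γ]
    {X : Ω → α} {Y : Ω → β} {Z : Ω → γ} (hX : Measurable X) (hY : Measurable Y) (hZ : Measurable Z)
    (h1 : IndepFun X (fun ω => (Y ω, Z ω)) P) (h2 : IndepFun Y Z P) :
    IndepFun (fun ω => (X ω, Y ω)) Z P := by
  have := Measure.isProbabilityMeasure_map (μ := P) hX.aemeasurable
  have := Measure.isProbabilityMeasure_map (μ := P) hY.aemeasurable
  have := Measure.isProbabilityMeasure_map (μ := P) hZ.aemeasurable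
  have h3 : IndepFun X Y P := h1.comp measurable_id measurable_fst
  rw [indepFun_iff_map_prod_eq_prod_map_map (by fun_prop) (by fun_prop)] at h1 h2 h3 ⊢
  rw [h3]
  rw [h2] at h1
  have h4 : (fun ω => ((X ω, Y ω), Z ω)) = MeasurableEquiv.prodAssoc.symm ∘ fun ω => (X ω, (Y ω, Z ω)) := by
    ext ω <;> rfl
  rw [h4, ← Measure.map_map (MeasurableEquiv.measurable _) (by fun_prop), h1, ← Measure.prodAssoc_prod,
    Measure.map_map (MeasurableEquiv.measurable _) (MeasurableEquiv.measurable _)]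
  simp

def zz (S : H → H) (η : ℕ → Ω → H) (u₀ : Ω → H) (V : H → E) (k : ℕ) (ω : Ω) : H × E :=
  (traj S η u₀ k ω, ∑ n ∈ Finset.Icc 1 k, V (traj S η u₀ n ω))

lemma zz_meas {Ω' : Type} [MeasurableSpace Ω'] {η : ℕ → Ω' → H} {u₀ : Ω' → H} (hS : Continuous S)
    (hη : ∀ k, Measurable (η k)) (hu : Measurable u₀) {V : H → E} (hV : Measurable V) (n : ℕ) :
    Measurable (zz S η u₀ V n) := by
  refine (traj_meas hS hη hu n).prodMk ?_
  exact Finset.measurable_sum _ fun i _ => hV.comp (traj_meas hS hη hu i)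

lemma zz_indep (hD : CondD P e η b ξ p) (hS : Continuous S) (hηmeas : ∀ k, Measurable (η k))
    (hu₀ : Measurable u₀) (hindep : IndepFun u₀ (fun ω (k : ℕ) => η k ω) P)
    {V : H → E} (hV : Measurable V) (k : ℕ) : IndepFun (zz S η u₀ V k) (η (k + 1)) P := by
  set Y : Ω → ℕ → H := fun ω i => if i ≤ k then η i ω else 0 with hY
  have hYm : Measurable Y := by
    refine measurable_pi_iff.2 fun i => ?_
    by_cases hi : i ≤ k <;> simp [hY, hi, hηmeas i]
  have h1 : IndepFun Y (η (k + 1)) P := by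
    refine indepFun_of_Ms hD (s := {i | i.2 ≤ k}) (t := {i | i.2 = k + 1}) ?_ ?_
      (eta_Ms hD (by simp))
    · rw [Set.disjoint_left]; rintro ⟨a, c⟩ h h'; simp at h h'; omega
    · refine (@measurable_pi_iff Ω ℕ (fun _ => H) (Ms ξ _) _ _).2 fun i => ?_
      by_cases hi : i ≤ k
      · simp only [hY, hi, if_true]
        exact eta_Ms hD (by simp [hi])
      · simp only [hY, hi, if_false]
        exact @measurable_const _ _ _ (Ms ξ _) _
  have h2 : IndepFun u₀ (fun ω => (Y ω, η (k + 1) ω)) P := by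
    have hm : Measurable (fun h : ℕ → H => ((fun i => if i ≤ k then h i else 0 : ℕ → H), h (k + 1))) := by
      refine Measurable.prodMk (measurable_pi_iff.2 fun i => ?_) (measurable_pi_apply _)
      by_cases hi : i ≤ k
      · simp only [hi, if_true]; exact measurable_pi_apply i
      · simp only [hi, if_false]; exact measurable_const
    exact hindep.comp measurable_id hm
  have h3 := indep3 hu₀ hYm (hηmeas _) h2 h1
  have h4 : zz S η u₀ V k = zz S (fun i (q : H × (ℕ → H)) => q.2 i) (fun q => q.1) V k ∘
      fun ω => (u₀ ω, Y ω) := by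
    have h5 : ∀ n ≤ k, ∀ ω, traj S η u₀ n ω =
        traj S (fun i (q : H × (ℕ → H)) => q.2 i) (fun q => q.1) n (u₀ ω, Y ω) := by
      intro n hn ω
      induction n with
      | zero => rfl
      | succ n ih =>
        simp only [traj]
        rw [ih (by omega)]
        simp [hY, hn]
    ext1 ω
    simp only [zz, Function.comp]
    rw [h5 k le_rfl]
    congr 1
    refine Finset.sum_congr rfl fun n hn => ?_
    rw [h5 n (Finset.mem_Icc.1 hn).2]
  rw [h4]
  exact h3.comp (zz_meas hS (fun i => (measurable_pi_apply i).comp measurable_snd) measurable_fst hV k) measurable_id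

theorem markov (hD : CondD P e η b ξ p) (hS : Continuous S) (hηmeas : ∀ k, Measurable (η k))
    (hu₀ : Measurable u₀) (hindep : IndepFun u₀ (fun ω (k : ℕ) => η k ω) P)
    {V : H → E} (hV : Measurable V) (k : ℕ) : ∀ g : H × E → ℝ≥0∞, Measurable g →
    ∫⁻ ω, g (zz S η u₀ V k ω) ∂P = ∫⁻ ω, (TT S (Measure.map (η 1) P) V)^[k] g (u₀ ω, 0) ∂P := by
  have := Measure.isProbabilityMeasure_map (μ := P) (hηmeas 1).aemeasurable
  induction k with
  | zero => intro g hg; simp [zz, traj]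
  | succ k ih =>
    intro g hg
    rw [Function.iterate_succ_apply, ← ih _ (TT_meas hS hV hg)]
    have h1 := zz_indep hD hS hηmeas hu₀ hindep hV k
    have hzm := zz_meas hS hηmeas hu₀ hV k
    have := Measure.isProbabilityMeasure_map (μ := P) hzm.aemeasurable
    rw [indepFun_iff_map_prod_eq_prod_map_map hzm.aemeasurable (hηmeas _).aemeasurable, eta_law hD (k + 1)] at h1
    set G : (H × E) × H → ℝ≥0∞ := fun q => g (S q.1.1 + q.2, q.1.2 + V (S q.1.1 + q.2)) with hG
    have hGm : Measurable G := by
      have := hS.measurable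
      fun_prop
    have h2 : ∀ ω, g (zz S η u₀ V (k + 1) ω) = G (zz S η u₀ V k ω, η (k + 1) ω) := by
      intro ω
      simp only [zz, hG, traj]
      congr 2
      rw [Finset.sum_Icc_succ_top (by omega)]
      rfl
    simp only [h2]
    rw [← lintegral_map (f := G) hGm (hzm.prodMk (hηmeas _)), h1, lintegral_prod _ hGm.aemeasurable,
      lintegral_map (f := fun z => ∫⁻ y, G (z, y) ∂(Measure.map (η 1) P)) hGm.lintegral_prod_right' hzm]
    rfl

lemma traj_mem {A : Set H} (hs : Sys S (Measure.map (η 1) P) A K) (hD : CondD P e η b ξ p)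
    (hηmeas : ∀ k, Measurable (η k)) (hu : ∀ᵐ ω ∂P, u₀ ω ∈ A) :
    ∀ᵐ ω ∂P, ∀ n, traj S η u₀ n ω ∈ A := by
  have h1 : ∀ᵐ ω ∂P, ∀ n, η n ω ∈ K := by
    rw [ae_all_iff]
    intro n
    have := hs.aeK
    rw [← eta_law hD n] at this
    exact ae_of_ae_map (hηmeas n).aemeasurable this
  filter_upwards [h1, hu] with ω h1 h2 n
  induction n with
  | zero => exact h2
  | succ n ih => exact hs.inv _ ih _ (h1 _)

end Core8


section Core9

variable {H : Type} [NormedAddCommGroup H] [MeasurableSpace H] [BorelSpace H]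
    {Ω : Type} [MeasurableSpace Ω] {P : Measure Ω} [IsProbabilityMeasure P]
    {u : ℕ → Ω → H} {A : Set H}

def SS {E : Type} [AddCommMonoid E] (u : ℕ → Ω → H) (W : H → E) (k : ℕ) (ω : Ω) : E :=
  ∑ n ∈ Finset.Icc 1 k, W (u n ω)

def IsQ (P : Measure Ω) (u : ℕ → Ω → H) (V : H →ᵇ ℝ) (q : ℝ) : Prop :=
  ∀ ε > 0, ∀ᶠ k : ℕ in atTop, ex (k * (q - ε)) ≤ ∫⁻ ω, ex (SS u V k ω) ∂P ∧
    ∫⁻ ω, ex (SS u V k ω) ∂P ≤ ex (k * (q + ε))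

lemma ex_meas : Measurable ex := Real.measurable_exp.ennreal_ofReal

lemma SS_meas (hu : ∀ n, Measurable (u n)) {E : Type} [AddCommMonoid E] [MeasurableSpace E]
    [MeasurableAdd₂ E] {W : H → E} (hW : Measurable W) (k : ℕ) : Measurable (SS u W k) :=
  Finset.measurable_sum _ fun n _ => hW.comp (hu n)

lemma IsQ_mono (hA : ∀ᵐ ω ∂P, ∀ n, u n ω ∈ A) {V V' : H →ᵇ ℝ} {q q' d : ℝ}
    (h : IsQ P u V q) (h' : IsQ P u V' q') (hd : ∀ x ∈ A, V x ≤ V' x + d) : q ≤ q' + d := by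
  refine le_of_forall_pos_le_add fun δ hδ => ?_
  obtain ⟨k, h1, h2, hk⟩ := ((h (δ/2) (by positivity)).and ((h' (δ/2) (by positivity)).and (eventually_gt_atTop 0))).exists
  have hk' : (0 : ℝ) < k := by exact_mod_cast hk
  have h3 : ∫⁻ ω, ex (SS u V k ω) ∂P ≤ ex (k * d) * ∫⁻ ω, ex (SS u V' k ω) ∂P := by
    rw [← lintegral_const_mul' _ _ (ex_ne_top _)]
    refine lintegral_mono_ae ?_
    filter_upwards [hA] with ω hω
    rw [← ex_add]
    apply ex_mono
    unfold SS
    calc _ ≤ ∑ n ∈ Finset.Icc 1 k, (V' (u n ω) + d) := Finset.sum_le_sum fun n _ => hd _ (hω n)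
      _ = _ := by rw [Finset.sum_add_distrib]; simp; ring
  have h4 := (h1.1.trans h3).trans (mul_le_mul_right h2.2 _)
  rw [← ex_add, ex_le_iff, ← mul_add] at h4
  have := le_of_mul_le_mul_left h4 hk'
  linarith

lemma IsQ_const (c : ℝ) : IsQ P u (BoundedContinuousFunction.const H c) c := by
  intro ε hε
  refine Eventually.of_forall fun k => ?_
  have : ∫⁻ ω, ex (SS u (BoundedContinuousFunction.const H c) k ω) ∂P = ex (k * c) := by
    simp [SS]
  rw [this]
  constructor <;> apply ex_mono <;> nlinarith [(Nat.cast_nonneg k : (0:ℝ) ≤ k)]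

lemma ex_rpow (x a : ℝ) : ex x ^ a = ex (a * x) := by
  unfold ex
  rw [ENNReal.ofReal_rpow_of_pos (Real.exp_pos _), ← Real.exp_mul, mul_comm]

lemma IsQ_convex (hu : ∀ n, Measurable (u n)) {V V' : H →ᵇ ℝ} {q q' r a c : ℝ}
    (h : IsQ P u V q) (h' : IsQ P u V' q') (ha : 0 ≤ a) (hc : 0 ≤ c) (hac : a + c = 1)
    (hr : IsQ P u (a • V + c • V') r) : r ≤ a * q + c * q' := by
  refine le_of_forall_pos_le_add fun δ hδ => ?_
  obtain ⟨k, h1, h2, h3, hk⟩ := ((h (δ/2) (by positivity)).and ((h' (δ/2) (by positivity)).and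
    ((hr (δ/2) (by positivity)).and (eventually_gt_atTop 0)))).exists
  have hk' : (0 : ℝ) < k := by exact_mod_cast hk
  have m : ∀ V : H →ᵇ ℝ, Measurable fun ω => ex (SS u V k ω) := fun V =>
    ex_meas.comp (SS_meas hu V.continuous.measurable k)
  have h4 := ENNReal.lintegral_mul_norm_pow_le (μ := P) (m V).aemeasurable (m V').aemeasurable ha hc hac
  have h5 : ∀ ω, ex (SS u V k ω) ^ a * ex (SS u V' k ω) ^ c = ex (SS u (a • V + c • V') k ω) := by
    intro ω
    rw [ex_rpow, ex_rpow, ← ex_add]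
    congr 1
    simp only [SS, Finset.mul_sum, ← Finset.sum_add_distrib]
    rfl
  simp only [h5] at h4
  have h6 : (∫⁻ ω, ex (SS u V k ω) ∂P) ^ a ≤ ex (a * (k * (q + δ / 2))) := by
    rw [← ex_rpow]; exact ENNReal.rpow_le_rpow h1.2 ha
  have h7 : (∫⁻ ω, ex (SS u V' k ω) ∂P) ^ c ≤ ex (c * (k * (q' + δ / 2))) := by
    rw [← ex_rpow]; exact ENNReal.rpow_le_rpow h2.2 hc
  have h8 := (h3.1.trans h4).trans (mul_le_mul' h6 h7)
  rw [← ex_add, ex_le_iff] at h8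
  have h9 : (k : ℝ) * (r - δ / 2) ≤ k * (a * q + c * q' + (a + c) * (δ / 2)) := by nlinarith
  have := le_of_mul_le_mul_left h9 hk'
  rw [hac] at this
  linarith

lemma IsQ_tendsto (hu : ∀ n, Measurable (u n)) {V : H →ᵇ ℝ} {q : ℝ} (h : IsQ P u V q) :
    Tendsto (fun k : ℕ => (k : ℝ)⁻¹ *
            Real.log (∫ ω, Real.exp (∑ n ∈ Finset.Icc 1 k, V (u n ω)) ∂P)) atTop (𝓝 q) := by
  rw [Metric.tendsto_nhds]
  intro ε hε
  filter_upwards [h (ε / 2) (by positivity), eventually_gt_atTop 0] with k hk hk0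
  have hk' : (0 : ℝ) < k := by exact_mod_cast hk0
  have h1 : ∫ ω, Real.exp (∑ n ∈ Finset.Icc 1 k, V (u n ω)) ∂P = (∫⁻ ω, ex (SS u V k ω) ∂P).toReal := by
    rw [integral_eq_lintegral_of_nonneg_ae (Eventually.of_forall fun ω => (Real.exp_pos _).le)]
    · rfl
    · exact (Real.measurable_exp.comp (SS_meas hu V.continuous.measurable k)).aestronglyMeasurable
  rw [h1]
  have hfin : ∫⁻ ω, ex (SS u V k ω) ∂P ≠ ⊤ := ne_top_of_le_ne_top (ex_ne_top _) hk.2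
  have h2 := ENNReal.toReal_mono hfin hk.1
  have h3 := ENNReal.toReal_mono (ex_ne_top _) hk.2
  unfold ex at h2 h3
  rw [ENNReal.toReal_ofReal (Real.exp_pos _).le] at h2 h3
  have h4 := (Real.le_log_iff_exp_le (lt_of_lt_of_le (Real.exp_pos _) h2)).2 h2
  have h5 := (Real.log_le_iff_le_exp (lt_of_lt_of_le (Real.exp_pos _) h2)).2 h3
  unfold ex
  set z := Real.log (∫⁻ ω, ENNReal.ofReal (Real.exp (SS u V k ω)) ∂P).toReal
  rw [Real.dist_eq, abs_lt]
  have h6 : q - ε / 2 ≤ (k : ℝ)⁻¹ * z := by rw [le_inv_mul_iff₀ hk']; exact h4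
  have h7 : (k : ℝ)⁻¹ * z ≤ q + ε / 2 := by rw [inv_mul_le_iff₀ hk']; exact h5
  constructor <;> linarith

lemma occ_integral (x : ℕ → H) {k : ℕ} (hk : k ≠ 0) (V : H →ᵇ ℝ) :
    ∫ y, V y ∂(occ x k : Measure H) = (k : ℝ)⁻¹ * ∑ n ∈ Finset.range k, V (x n) := by
  have : (occ x k : Measure H) = (k : ℝ≥0∞)⁻¹ • ∑ n ∈ Finset.range k, Measure.dirac (x n) := by
    simp [occ, hk]
  rw [this, integral_smul_measure, integral_finset_sum_measure (fun n _ => V.integrable _)]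
  simp only [integral_dirac]
  simp

lemma occ_compl (x : ℕ → H) {k : ℕ} (hx : ∀ n, x n ∈ A) (hA : MeasurableSet A) :
    (occ x k : Measure H) Aᶜ = 0 := by
  by_cases hk : k = 0
  · have : (occ x k : Measure H) = Measure.dirac (x 0) := by simp [occ, hk]
    rw [this, Measure.dirac_apply' _ hA.compl]; simp [hx 0]
  · have : (occ x k : Measure H) = (k : ℝ≥0∞)⁻¹ • ∑ n ∈ Finset.range k, Measure.dirac (x n) := by
      simp [occ, hk]
    rw [this]
    simp only [Measure.smul_apply, Measure.finset_sum_apply, Measure.dirac_apply' _ hA.compl]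
    simp [hx]

lemma cont_int (V : H →ᵇ ℝ) : Continuous fun σ : ProbabilityMeasure H => ∫ x, V x ∂(σ : Measure H) :=
  continuous_iff_continuousAt.2 fun _ =>
    ProbabilityMeasure.tendsto_iff_forall_integral_tendsto.1 tendsto_id V

lemma weak_nhd {σ : ProbabilityMeasure H} {G : Set (ProbabilityMeasure H)} (hG : G ∈ 𝓝 σ) :
    ∃ s : Finset (H →ᵇ ℝ), ∃ ε > 0, ∀ τ : ProbabilityMeasure H,
      (∀ V ∈ s, |∫ x, V x ∂(τ : Measure H) - ∫ x, V x ∂(σ : Measure H)| < ε) → τ ∈ G := by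
  set Φ : ProbabilityMeasure H → (H →ᵇ ℝ) → ℝ := fun τ V => ∫ x, V x ∂(τ : Measure H) with hΦ
  have h1 : comap Φ (𝓝 (Φ σ)) ≤ 𝓝 σ := by
    have : Tendsto id (comap Φ (𝓝 (Φ σ))) (𝓝 σ) := by
      rw [ProbabilityMeasure.tendsto_iff_forall_integral_tendsto]
      intro V
      have hc : Tendsto Φ (comap Φ (𝓝 (Φ σ))) (𝓝 (Φ σ)) := tendsto_comap
      exact tendsto_pi_nhds.1 hc V
    rwa [Tendsto, Filter.map_id] at this
  obtain ⟨U, hU, hUG⟩ := mem_comap.1 (h1 hG)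
  rw [nhds_pi, Filter.mem_pi'] at hU
  obtain ⟨I, t, ht, htU⟩ := hU
  have h2 : ∀ᶠ ε : ℝ in 𝓝[>] 0, ∀ V ∈ I, Metric.ball (Φ σ V) ε ⊆ t V := by
    rw [Filter.eventually_all_finset]
    intro V _
    obtain ⟨ε, hε, h⟩ := Metric.mem_nhds_iff.1 (ht V)
    filter_upwards [Ioo_mem_nhdsGT hε] with δ hδ
    exact (Metric.ball_subset_ball hδ.2.le).trans h
  obtain ⟨ε, h3, h4⟩ := (h2.and self_mem_nhdsWithin).exists
  refine ⟨I, ε, h4, fun τ hτ => hUG (htU fun V hV => h3 V hV ?_)⟩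
  exact hτ V hV

end Core9


section Core10

variable {H : Type} [NormedAddCommGroup H] [MeasurableSpace H] [BorelSpace H]
    {Ω : Type} [MeasurableSpace Ω] {P : Measure Ω} [IsProbabilityMeasure P]
    {u : ℕ → Ω → H} {A : Set H} {Q : (H →ᵇ ℝ) → ℝ}

lemma log_ex (x : ℝ) : ENNReal.log (ex x) = (x : EReal) := by
  unfold ex
  rw [ENNReal.log_ofReal_of_pos (Real.exp_pos _), Real.log_exp]

lemma log_upper {k : ℕ} (hk : 0 < k) {a : ℝ≥0∞} {x : ℝ} (h : a ≤ ex (k * x)) :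
    (((k : ℝ)⁻¹ : ℝ) : EReal) * ENNReal.log a ≤ (x : EReal) := by
  have hk' : (0 : ℝ) < k := by exact_mod_cast hk
  have h1 := ENNReal.log_le_log h
  rw [log_ex] at h1
  refine (mul_le_mul_of_nonneg_left h1 (EReal.coe_nonneg.2 (inv_pos.2 hk').le)).trans ?_
  rw [← EReal.coe_mul, inv_mul_cancel_left₀ hk'.ne']

lemma log_lower {k : ℕ} (hk : 0 < k) {a : ℝ≥0∞} {x : ℝ} (h : ex (k * x) ≤ a) :
    (x : EReal) ≤ (((k : ℝ)⁻¹ : ℝ) : EReal) * ENNReal.log a := by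
  have hk' : (0 : ℝ) < k := by exact_mod_cast hk
  have h1 := ENNReal.log_le_log h
  rw [log_ex] at h1
  refine le_trans ?_ (mul_le_mul_of_nonneg_left h1 (EReal.coe_nonneg.2 (inv_pos.2 hk').le))
  rw [← EReal.coe_mul, inv_mul_cancel_left₀ hk'.ne']

def IR (Q : (H →ᵇ ℝ) → ℝ) (σ : ProbabilityMeasure H) : ℝ≥0∞ :=
  ⨆ V : H →ᵇ ℝ, ENNReal.ofReal ((∫ x, V x ∂(σ : Measure H)) - Q V)

lemma IR_lsc : LowerSemicontinuous (IR Q) := by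
  unfold IR
  refine lowerSemicontinuous_iSup fun V => Continuous.lowerSemicontinuous ?_
  exact ENNReal.continuous_ofReal.comp ((cont_int V).sub continuous_const)

def dV (A : Set H) (n : ℕ) : H →ᵇ ℝ :=
  BoundedContinuousFunction.ofNormedAddCommGroup (fun x => n * min 1 (Metric.infDist x A))
    (by have := Metric.continuous_infDist_pt A; fun_prop) n (by
      intro x
      have : (0 : ℝ) ≤ min 1 (Metric.infDist x A) := le_min zero_le_one Metric.infDist_nonneg
      rw [Real.norm_of_nonneg (by positivity)]
      exact mul_le_of_le_one_right (Nat.cast_nonneg n) (min_le_left _ _))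

lemma dV_apply (n : ℕ) (x : H) : dV A n x = n * min 1 (Metric.infDist x A) := rfl

lemma IR_supp (hAc : IsCompact A) (hne : A.Nonempty) (hA : ∀ᵐ ω ∂P, ∀ n, u n ω ∈ A)
    (hQ : ∀ V, IsQ P u V (Q V)) {σ : ProbabilityMeasure H} (h : IR Q σ ≠ ⊤) :
    (σ : Measure H) Aᶜ = 0 := by
  have hQ0 : ∀ n, Q (dV A n) ≤ 0 := by
    intro n
    have := IsQ_mono (d := 0) hA (hQ (dV A n)) (IsQ_const (P := P) (u := u) 0) (by
      intro x hx
      simp [dV_apply, Metric.infDist_zero_of_mem hx])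
    simpa using this
  set m := ∫ x, dV A 1 x ∂(σ : Measure H) with hm
  have hint : ∀ n : ℕ, ∫ x, dV A n x ∂(σ : Measure H) = n * m := by
    intro n
    rw [hm, ← integral_const_mul]
    congr 1; ext x; simp [dV_apply]
  have hnn : ∀ x, 0 ≤ dV A 1 x := by
    intro x; simp [dV_apply, Metric.infDist_nonneg]
  have hm0 : 0 ≤ m := integral_nonneg hnn
  have hm1 : m = 0 := by
    by_contra hmne
    have hmp : 0 < m := lt_of_le_of_ne hm0 (Ne.symm hmne)
    obtain ⟨n, hn⟩ := exists_nat_gt ((IR Q σ).toReal / m)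
    rw [div_lt_iff₀ hmp] at hn
    have h1 : ENNReal.ofReal (n * m) ≤ IR Q σ := by
      refine le_trans ?_ (le_iSup (fun V : H →ᵇ ℝ => ENNReal.ofReal ((∫ x, V x ∂(σ : Measure H)) - Q V)) (dV A n))
      apply ENNReal.ofReal_le_ofReal
      rw [hint]; linarith [hQ0 n]
    have := (ENNReal.ofReal_le_iff_le_toReal h).1 h1
    linarith
  rw [hm, integral_eq_zero_iff_of_nonneg hnn ((dV A 1).integrable _)] at hm1
  have : ∀ᵐ x ∂(σ : Measure H), x ∈ A := by
    filter_upwards [hm1] with x hx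
    rw [hAc.isClosed.mem_iff_infDist_zero hne]
    simp only [dV_apply, Pi.zero_apply, Nat.cast_one, one_mul] at hx
    rcases min_choice 1 (Metric.infDist x A) with h' | h'
    · rw [h'] at hx; norm_num at hx
    · rw [h'] at hx; exact hx
  exact this

lemma cpt_supp (hAc : IsCompact A) : IsCompact (closure {σ : ProbabilityMeasure H | (σ : Measure H) Aᶜ = 0}) := by
  apply isCompact_closure_of_isTightMeasureSet
  rw [isTightMeasureSet_iff_exists_isCompact_measure_compl_le]
  intro ε hε
  refine ⟨A, hAc, ?_⟩
  rintro _ ⟨σ, hσ, rfl⟩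
  have : (σ : Measure H) Aᶜ = 0 := hσ
  rw [this]; exact zero_le

lemma IR_good (hAc : IsCompact A) (hne : A.Nonempty) (hA : ∀ᵐ ω ∂P, ∀ n, u n ω ∈ A)
    (hQ : ∀ V, IsQ P u V (Q V)) : GoodRate (IR Q) := by
  refine ⟨IR_lsc, fun c hc => ?_⟩
  refine (cpt_supp hAc).of_isClosed_subset (IR_lsc.isClosed_preimage c) ?_
  intro σ hσ
  exact subset_closure (IR_supp hAc hne hA hQ (ne_top_of_le_ne_top hc hσ))

lemma sum_shift (V : ℕ → ℝ) {R : ℝ} (hV : ∀ n, |V n| ≤ R) (k : ℕ) :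
    |∑ n ∈ Finset.range k, V n - ∑ n ∈ Finset.Icc 1 k, V n| ≤ 2 * R := by
  have h1 : ∑ n ∈ Finset.Icc 1 k, V n = ∑ n ∈ Finset.range k, V (n + 1) := by
    rw [Finset.range_eq_Ico, Finset.sum_Ico_add' V 0 k 1]; rfl
  have h2 := Finset.sum_range_succ V k
  rw [Finset.sum_range_succ' V k] at h2
  rw [h1, show ∑ n ∈ Finset.range k, V n - ∑ n ∈ Finset.range k, V (n + 1) = V 0 - V k by linarith]
  have := abs_sub (V 0) (V k)
  linarith [hV 0, hV k]

lemma cheb (hu : ∀ n, Measurable (u n)) {V : H →ᵇ ℝ} {q : ℝ} (hq : IsQ P u V q) {c d : ℝ} (hcd : c < d) :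
    ∀ᶠ k : ℕ in atTop, P {ω | d < (∫ x, V x ∂(occ (fun n => u n ω) k : Measure H)) - q} ≤ ex (-(k * c)) := by
  have hδ : 0 < (d - c) / 2 := by linarith
  obtain ⟨N, hN⟩ := exists_nat_gt (2 * ‖V‖ / ((d - c) / 2))
  filter_upwards [hq _ hδ, eventually_ge_atTop N, eventually_gt_atTop 0] with k hk hkN hk0
  have hk' : (0 : ℝ) < k := by exact_mod_cast hk0
  have hkN' : (N : ℝ) ≤ k := by exact_mod_cast hkN
  rw [div_lt_iff₀ hδ] at hN
  have hb : 2 * ‖V‖ ≤ k * ((d - c) / 2) := hN.le.trans (mul_le_mul_of_nonneg_right hkN' hδ.le)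
  have h1 : {ω | d < (∫ x, V x ∂(occ (fun n => u n ω) k : Measure H)) - q} ⊆
      {ω | ex (k * (d + q) - 2 * ‖V‖) ≤ ex (SS u V k ω)} := by
    intro ω hω
    simp only [Set.mem_ofPred_eq] at hω ⊢
    rw [occ_integral _ hk0.ne'] at hω
    rw [ex_le_iff]
    have h2 : d + q < (k : ℝ)⁻¹ * ∑ n ∈ Finset.range k, V (u n ω) := by linarith
    rw [lt_inv_mul_iff₀ hk'] at h2
    have := (abs_le.1 (sum_shift (fun n => V (u n ω)) (fun n => V.norm_coe_le_norm _) k)).2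
    unfold SS
    linarith
  refine (measure_mono h1).trans ?_
  refine (meas_ge_le_lintegral_div (ex_meas.comp (SS_meas hu V.continuous.measurable k)).aemeasurable (ex_ne_zero _) (ex_ne_top _)).trans ?_
  refine ENNReal.div_le_of_le_mul (hk.2.trans ?_)
  rw [← ex_add, ex_le_iff]
  nlinarith

lemma ldp_upper (hAc : IsCompact A) (hu : ∀ n, Measurable (u n)) (hA : ∀ᵐ ω ∂P, ∀ n, u n ω ∈ A)
    (hQ : ∀ V, IsQ P u V (Q V)) {F : Set (ProbabilityMeasure H)} (hF : IsClosed F) :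
    Filter.limsup (fun k : ℕ => (((k : ℝ)⁻¹ : ℝ) : EReal) * ENNReal.log (P {ω | occ (fun n => u n ω) k ∈ F})) atTop
      ≤ -(⨅ σ ∈ F, (IR Q σ : EReal)) := by
  rw [EReal.le_neg, ← EReal.ge_of_forall_gt_iff_ge]
  intro c hc
  rw [EReal.le_neg]
  refine le_of_forall_gt_imp_ge_of_dense ?_
  intro y hy
  obtain ⟨c', hc', hc'y⟩ := EReal.lt_iff_exists_real_btwn.1 hy
  rw [← EReal.coe_neg, EReal.coe_lt_coe_iff] at hc'
  refine le_trans ?_ hc'y.le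
  by_cases hc0 : c < 0
  · refine limsup_le_of_le (h := ?_)
    filter_upwards [eventually_gt_atTop 0] with k hk
    refine log_upper hk (prob_le_one.trans ?_)
    rw [← ex_zero, ex_le_iff]
    have : (0:ℝ) ≤ k := Nat.cast_nonneg k
    have : 0 ≤ c' := by linarith
    positivity
  push Not at hc0
  have hV : ∀ σ ∈ F, ∃ V : H →ᵇ ℝ, c < (∫ x, V x ∂(σ : Measure H)) - Q V := by
    intro σ hσ
    have h1 : (c : EReal) < (IR Q σ : EReal) := hc.trans_le (iInf₂_le σ hσ)
    have h2 : ENNReal.ofReal c < IR Q σ := by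
      rw [← EReal.coe_ennreal_lt_coe_ennreal_iff, EReal.coe_ennreal_ofReal, max_eq_left hc0]
      exact h1
    obtain ⟨V, hV⟩ := lt_iSup_iff.1 h2
    exact ⟨V, (ENNReal.ofReal_lt_ofReal_iff_of_nonneg hc0).1 hV⟩
  choose! V hV using hV
  have hcpt : IsCompact (closure {σ : ProbabilityMeasure H | (σ : Measure H) Aᶜ = 0} ∩ F) :=
    (cpt_supp hAc).inter_right hF
  obtain ⟨t, ht, htc⟩ := hcpt.elim_nhds_subcover
    (fun σ => {τ | c < (∫ x, V σ x ∂(τ : Measure H)) - Q (V σ)}) (fun σ hσ =>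
      (isOpen_lt continuous_const ((cont_int (V σ)).sub continuous_const)).mem_nhds (hV σ hσ.2))
  set c1 := (c + (-c')) / 2 with hc1
  have hcc : c1 < c := by linarith
  have h3 : ∀ᶠ k : ℕ in atTop, ∀ σ ∈ t,
      P {ω | c < (∫ x, V σ x ∂(occ (fun n => u n ω) k : Measure H)) - Q (V σ)} ≤ ex (-(k * c1)) := by
    rw [Filter.eventually_all_finset]
    intro σ _
    exact cheb hu (hQ _) hcc
  obtain ⟨N, hN⟩ := exists_nat_gt ((t.card : ℝ) / (c1 + c'))
  have hp : 0 < c1 + c' := by linarith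
  rw [div_lt_iff₀ hp] at hN
  refine limsup_le_of_le (h := ?_)
  filter_upwards [h3, eventually_ge_atTop N, eventually_gt_atTop 0] with k hk hkN hk0
  have hkN' : (N : ℝ) ≤ k := by exact_mod_cast hkN
  refine log_upper hk0 ?_
  have h4 : P {ω | occ (fun n => u n ω) k ∈ F} ≤
      P (⋃ σ ∈ t, {ω | c < (∫ x, V σ x ∂(occ (fun n => u n ω) k : Measure H)) - Q (V σ)}) := by
    refine measure_mono_ae ?_
    filter_upwards [hA] with ω hω hωF
    have h5 := htc ⟨subset_closure (occ_compl (fun n => u n ω) hω hAc.measurableSet), hωF⟩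
    simp only [Set.mem_iUnion] at h5
    obtain ⟨σ, hσ, h6⟩ := h5
    exact Set.mem_biUnion (x := σ) hσ h6
  refine h4.trans ((measure_biUnion_finset_le _ _).trans ((Finset.sum_le_sum hk).trans ?_))
  rw [Finset.sum_const, nsmul_eq_mul]
  have h7 : (t.card : ℝ≥0∞) ≤ ex (k * (c1 + c')) := by
    unfold ex
    rw [← ENNReal.ofReal_natCast]
    apply ENNReal.ofReal_le_ofReal
    have : (t.card : ℝ) ≤ k * (c1 + c') := hN.le.trans (mul_le_mul_of_nonneg_right hkN' hp.le)
    linarith [Real.add_one_le_exp ((k:ℝ) * (c1 + c'))]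
  refine (mul_le_mul_left h7 _).trans ?_
  rw [← ex_add, ex_le_iff]
  linarith

lemma lower_core (hu : ∀ n, Measurable (u n)) {s : Finset (H →ᵇ ℝ)} {ε c : ℝ} (hε : 0 < ε) (hc : 0 ≤ c)
    {σ : ProbabilityMeasure H} {G : Set (ProbabilityMeasure H)}
    (hG : ∀ τ : ProbabilityMeasure H,
      (∀ V ∈ s, |∫ x, V x ∂(τ : Measure H) - ∫ x, V x ∂(σ : Measure H)| < ε) → τ ∈ G)
    (hl : ∀ t ≥ 0, ∀ δ > 0, ∀ᶠ k : ℕ in atTop, ex (k * (-c - δ)) ≤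
      ∫⁻ ω, GF (NN t (fun i : s => ∫ x, i.1 x ∂(σ : Measure H))) k
        (SS u (fun x (i : s) => i.1 x) k ω) ∂P)
    {δ : ℝ} (hδ : 0 < δ) : ∀ᶠ k : ℕ in atTop, ex (k * (-c - δ)) ≤ P {ω | occ (fun n => u n ω) k ∈ G} := by
  set x0 : s → ℝ := fun i : s => ∫ x, i.1 x ∂(σ : Measure H) with hx0
  set W : H → s → ℝ := fun x i => i.1 x with hW
  set t := (c + δ + 1) / (ε / 2) with ht
  have ht0 : 0 ≤ t := by positivity
  have hte : t * (ε / 2) = c + δ + 1 := by rw [ht]; field_simp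
  set R := ∑ V ∈ s, ‖V‖ with hR
  have hRV : ∀ V ∈ s, ‖V‖ ≤ R := fun V hV => Finset.single_le_sum (f := fun V : H →ᵇ ℝ => ‖V‖) (fun _ _ => norm_nonneg _) hV
  obtain ⟨N, hN⟩ := exists_nat_gt (2 * R / (ε / 2))
  rw [div_lt_iff₀ (by positivity)] at hN
  obtain ⟨N', hN'⟩ := exists_nat_gt (2 / δ)
  rw [div_lt_iff₀ hδ] at hN'
  filter_upwards [hl t ht0 (δ / 2) (by positivity), eventually_ge_atTop N, eventually_ge_atTop N',
    eventually_gt_atTop 0] with k hk hkN hkN' hk0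
  have hk' : (0 : ℝ) < k := by exact_mod_cast hk0
  have hkN1 : (N : ℝ) ≤ k := by exact_mod_cast hkN
  have hkN1' : (N' : ℝ) ≤ k := by exact_mod_cast hkN'
  set B := {ω | ‖(k : ℝ)⁻¹ • SS u W k ω - x0‖ < ε / 2} with hB
  have hWm : Measurable W := measurable_pi_iff.2 fun i => i.1.continuous.measurable
  have hSm : Measurable (SS u W k) := SS_meas hu hWm k
  have hBm : MeasurableSet B := by
    have hcont : Continuous fun a : s → ℝ => ‖(k : ℝ)⁻¹ • a - x0‖ :=
      ((continuous_const_smul _).sub continuous_const).norm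
    exact hSm (isOpen_lt hcont continuous_const).measurableSet
  have h1 : ∫⁻ ω, GF (NN t x0) k (SS u W k ω) ∂P ≤ P B + ex (k * (-c - δ - 1)) := by
    calc _ ≤ ∫⁻ ω, (B.indicator (fun _ => 1) ω + ex (k * (-c - δ - 1))) ∂P := by
          refine lintegral_mono fun ω => ?_
          unfold GF NN
          by_cases hω : ω ∈ B
          · rw [Set.indicator_of_mem hω]
            refine le_trans ?_ le_self_add
            rw [← ex_zero, ex_le_iff]
            have := mul_nonneg ht0 (norm_nonneg ((k : ℝ)⁻¹ • SS u W k ω - x0))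
            nlinarith
          · rw [Set.indicator_of_notMem hω, zero_add, ex_le_iff]
            have h2 : ε / 2 ≤ ‖(k : ℝ)⁻¹ • SS u W k ω - x0‖ := not_lt.1 hω
            have := mul_le_mul_of_nonneg_left h2 ht0
            nlinarith
      _ = _ := by
          rw [lintegral_add_right _ measurable_const, lintegral_indicator_const hBm]
          simp
  have h2 : P B ≤ P {ω | occ (fun n => u n ω) k ∈ G} := by
    refine measure_mono fun ω hω => ?_
    refine hG _ fun V hV => ?_
    rw [occ_integral _ hk0.ne']
    have h3 := (norm_le_pi_norm ((k : ℝ)⁻¹ • SS u W k ω - x0) ⟨V, hV⟩).trans_lt hω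
    have h4 : ((k : ℝ)⁻¹ • SS u W k ω - x0) ⟨V, hV⟩ =
        (k : ℝ)⁻¹ * ∑ n ∈ Finset.Icc 1 k, V (u n ω) - ∫ x, V x ∂(σ : Measure H) := by
      simp [SS, hW, hx0, Finset.sum_apply]
    rw [h4, Real.norm_eq_abs] at h3
    have h5 := sum_shift (fun n => V (u n ω)) (fun n => V.norm_coe_le_norm _) k
    have h6 : |(k : ℝ)⁻¹ * ∑ n ∈ Finset.range k, V (u n ω) - (k : ℝ)⁻¹ * ∑ n ∈ Finset.Icc 1 k, V (u n ω)| ≤ ε / 2 := by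
      rw [← mul_sub, abs_mul, abs_of_pos (inv_pos.2 hk'), inv_mul_le_iff₀ hk']
      refine h5.trans ?_
      have := mul_le_mul_of_nonneg_right hkN1 (show 0 ≤ ε / 2 by positivity)
      linarith [hRV V hV]
    have := abs_sub_le ((k : ℝ)⁻¹ * ∑ n ∈ Finset.range k, V (u n ω)) ((k : ℝ)⁻¹ * ∑ n ∈ Finset.Icc 1 k, V (u n ω)) (∫ x, V x ∂(σ : Measure H))
    linarith
  have h7 := (hk.trans h1).trans (add_le_add_left h2 _)
  have h8 : ex (k * (-c - δ)) + ex (k * (-c - δ - 1)) ≤ ex (k * (-c - δ / 2)) := by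
    have e1 : ex (k * (-c - δ - 1)) ≤ ex (k * (-c - δ)) := ex_mono (by nlinarith)
    have e2 : (2 : ℝ≥0∞) ≤ ex (k * (δ / 2)) := by
      unfold ex
      rw [show (2 : ℝ≥0∞) = ENNReal.ofReal 2 by simp]
      apply ENNReal.ofReal_le_ofReal
      have : (1 : ℝ) ≤ k * (δ / 2) := by nlinarith
      linarith [Real.add_one_le_exp ((k:ℝ) * (δ / 2))]
    calc _ ≤ ex (k * (-c - δ)) + ex (k * (-c - δ)) := add_le_add_right e1 _
      _ = 2 * ex (k * (-c - δ)) := (two_mul _).symm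
      _ ≤ ex (k * (δ / 2)) * ex (k * (-c - δ)) := mul_le_mul_left e2 _
      _ = _ := by rw [← ex_add]; congr 1; ring
  exact (ENNReal.add_le_add_iff_right (ex_ne_top _)).1 (h8.trans h7)

lemma ldp_lower (hu : ∀ n, Measurable (u n))
    (hl : ∀ σ : ProbabilityMeasure H, ∀ s : Finset (H →ᵇ ℝ), IR Q σ ≠ ⊤ → ∀ t ≥ 0, ∀ δ > 0, ∀ᶠ k : ℕ in atTop,
      ex (k * (-(IR Q σ).toReal - δ)) ≤
      ∫⁻ ω, GF (NN t (fun i : s => ∫ x, i.1 x ∂(σ : Measure H))) k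
        (SS u (fun x (i : s) => i.1 x) k ω) ∂P) {G : Set (ProbabilityMeasure H)} (hG : IsOpen G) :
    -(⨅ σ ∈ G, (IR Q σ : EReal)) ≤
    Filter.liminf (fun k : ℕ => (((k : ℝ)⁻¹ : ℝ) : EReal) * ENNReal.log (P {ω | occ (fun n => u n ω) k ∈ G})) atTop := by
  rw [EReal.neg_le]
  refine le_iInf₂ fun σ hσ => ?_
  rw [EReal.neg_le]
  by_cases htop : IR Q σ = ⊤
  · simp [htop]
  rw [← EReal.coe_ennreal_toReal htop]
  refine le_of_forall_lt_imp_le_of_dense ?_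
  intro y hy
  obtain ⟨c', hyc', hc'⟩ := EReal.lt_iff_exists_real_btwn.1 hy
  rw [← EReal.coe_neg, EReal.coe_lt_coe_iff] at hc'
  refine hyc'.le.trans ?_
  obtain ⟨s, ε, hε, hs⟩ := weak_nhd (hG.mem_nhds hσ)
  have := lower_core hu hε ENNReal.toReal_nonneg hs (hl σ s htop) (δ := -(IR Q σ).toReal - c') (by linarith)
  refine le_liminf_of_le (h := ?_)
  filter_upwards [this, eventually_gt_atTop 0] with k hk hk0
  refine log_lower hk0 ?_
  rwa [sub_sub_cancel] at hk

end Core10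


section Core11

variable {H : Type} [NormedAddCommGroup H] [InnerProductSpace ℝ H] [CompleteSpace H]
    [SecondCountableTopology H] [MeasurableSpace H] [BorelSpace H]
    {Ω : Type} [MeasurableSpace Ω] {P : Measure Ω} [IsProbabilityMeasure P]
    {S : H → H} {e : HilbertBasis ℕ ℝ H}
    {η : ℕ → Ω → H} {b : ℕ → ℝ} {ξ : ℕ → ℕ → Ω → ℝ} {p : ℕ → ℝ → ℝ} {K A : Set H}
    {E : Type} [NormedAddCommGroup E] [NormedSpace ℝ E] [MeasurableSpace E] [BorelSpace E]
    [SecondCountableTopology E] {u₀ : Ω → H}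

lemma lam_chain (hs : Sys S (Measure.map (η 1) P) A K) (hD : CondD P e η b ξ p)
    (hηmeas : ∀ k, Measurable (η k))
    (hu₀ : Measurable u₀) (hindep : IndepFun u₀ (fun ω (k : ℕ) => η k ω) P)
    (hu : ∀ᵐ ω ∂P, u₀ ω ∈ A) {W : H → E} (hW : Measurable W) {F : E → ℝ} {L lam : ℝ} (hF : LipF L F)
    (h : IsLam S (Measure.map (η 1) P) A W F lam) : ∀ ε > 0, ∀ᶠ k : ℕ in atTop,
      ex (k * (lam - ε)) ≤ ∫⁻ ω, GF F k (SS (traj S η u₀) W k ω) ∂P ∧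
      ∫⁻ ω, GF F k (SS (traj S η u₀) W k ω) ∂P ≤ ex (k * (lam + ε)) := by
  intro ε hε
  filter_upwards [h ε hε] with k hk
  have h1 := markov hD hs.contS hηmeas hu₀ hindep hW k (fun z => GF F k z.2) ((GF_meas hF k).comp measurable_snd)
  have h2 : ∫⁻ ω, GF F k (SS (traj S η u₀) W k ω) ∂P = ∫⁻ ω, ZZ S (Measure.map (η 1) P) W F k (u₀ ω) ∂P := h1
  rw [h2]
  constructor
  · calc _ = ∫⁻ _, ex (k * (lam - ε)) ∂P := by simp
      _ ≤ _ := lintegral_mono_ae (by filter_upwards [hu] with ω hω using (hk _ hω).1)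
  · calc _ ≤ ∫⁻ _, ex (k * (lam + ε)) ∂P :=
          lintegral_mono_ae (by filter_upwards [hu] with ω hω using (hk _ hω).2)
      _ = _ := by simp

lemma isQ_of_lin (hs : Sys S (Measure.map (η 1) P) A K) (hD : CondD P e η b ξ p)
    (hηmeas : ∀ k, Measurable (η k))
    (hu₀ : Measurable u₀) (hindep : IndepFun u₀ (fun ω (k : ℕ) => η k ω) P)
    (hu : ∀ᵐ ω ∂P, u₀ ω ∈ A) {W : H → E} (hW : Measurable W) (l : E →L[ℝ] ℝ) {V : H →ᵇ ℝ}
    (hV : ∀ x, V x = l (W x)) {lam : ℝ}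
    (h : IsLam S (Measure.map (η 1) P) A W (fun a => l a) lam) : IsQ P (traj S η u₀) V lam := by
  intro ε hε
  filter_upwards [lam_chain hs hD hηmeas hu₀ hindep hu hW (clm_lip l) h ε hε, eventually_gt_atTop 0] with k hk hk0
  have hk' : (k : ℝ) ≠ 0 := by exact_mod_cast hk0.ne'
  have : ∀ ω, GF (fun a => l a) k (SS (traj S η u₀) W k ω) = ex (SS (traj S η u₀) V k ω) := by
    intro ω
    unfold GF SS
    beta_reduce
    rw [map_smul, map_sum, smul_eq_mul, mul_inv_cancel_left₀ hk']
    simp only [hV]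
  simpa only [this] using hk

lemma exists_Q (hs : Sys S (Measure.map (η 1) P) A K) [IsProbabilityMeasure (Measure.map (η 1) P)] :
    ∃ Q : (H →ᵇ ℝ) → ℝ, ∀ V : H →ᵇ ℝ, IsLam S (Measure.map (η 1) P) A V
      (fun a => ContinuousLinearMap.id ℝ ℝ a) (Q V) := by
  have : ∀ V : H →ᵇ ℝ, ∃ q, IsLam S (Measure.map (η 1) P) A V
      (fun a => ContinuousLinearMap.id ℝ ℝ a) q := fun V =>
    exists_lam hs (norm_nonneg _) (fun x => V.norm_coe_le_norm x) V.continuous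
      (clm_lip (ContinuousLinearMap.id ℝ ℝ)) (clm_concave _)
  choose Q hQ using this
  exact ⟨Q, hQ⟩

lemma low_bound (hs : Sys S (Measure.map (η 1) P) A K) (hD : CondD P e η b ξ p)
    (hηmeas : ∀ k, Measurable (η k))
    (hu₀ : Measurable u₀) (hindep : IndepFun u₀ (fun ω (k : ℕ) => η k ω) P)
    (hu : ∀ᵐ ω ∂P, u₀ ω ∈ A) {Q : (H →ᵇ ℝ) → ℝ} (hQ : ∀ V, IsQ P (traj S η u₀) V (Q V))
    (σ : ProbabilityMeasure H) (s : Finset (H →ᵇ ℝ)) (hσ : IR Q σ ≠ ⊤) :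
    ∀ t ≥ 0, ∀ δ > 0, ∀ᶠ k : ℕ in atTop,
      ex (k * (-(IR Q σ).toReal - δ)) ≤
      ∫⁻ ω, GF (NN t (fun i : s => ∫ x, i.1 x ∂(σ : Measure H))) k
        (SS (traj S η u₀) (fun x (i : s) => i.1 x) k ω) ∂P := by
  intro t ht δ hδ
  have := Measure.isProbabilityMeasure_map (μ := P) (hηmeas 1).aemeasurable
  have hA := traj_mem hs hD hηmeas hu
  set x0 : s → ℝ := fun i : s => ∫ x, i.1 x ∂(σ : Measure H) with hx0
  set W : H → s → ℝ := fun x i => i.1 x with hW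
  have hWc : Continuous W := continuous_pi fun i => i.1.continuous
  obtain ⟨R, hR⟩ : ∃ R, ∀ x, ‖W x‖ ≤ R := by
    refine ⟨∑ V ∈ s, ‖V‖, fun x => ?_⟩
    rw [pi_norm_le_iff_of_nonneg (Finset.sum_nonneg fun _ _ => norm_nonneg _)]
    intro i
    exact (i.1.norm_coe_le_norm x).trans
      (Finset.single_le_sum (f := fun V : H →ᵇ ℝ => ‖V‖) (fun _ _ => norm_nonneg _) i.2)
  obtain ⟨lam, hlam⟩ := exists_lam hs ht hR hWc (NN_lip ht x0) (NN_concave ht x0)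
  have h1 : -(IR Q σ).toReal ≤ lam := by
    refine dual_lower hs hR hWc ?_ ht hlam
    intro l q hq
    set V : H →ᵇ ℝ := BoundedContinuousFunction.ofNormedAddCommGroup (fun x => l (W x))
      (l.continuous.comp hWc) (‖l‖ * R) (fun x => (l.le_opNorm _).trans
        (mul_le_mul_of_nonneg_left (hR x) (norm_nonneg _))) with hVdef
    have hVl : ∀ x, V x = l (W x) := fun x => rfl
    have h2 := isQ_of_lin hs hD hηmeas hu₀ hindep hu hWc.measurable l hVl hq
    have h3 : Q V ≤ q := by
      have := IsQ_mono (d := 0) hA (hQ V) h2 (fun x _ => by simp)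
      linarith
    have h4 : ∫ x, V x ∂(σ : Measure H) = l x0 := by
      have hint : Integrable W (σ : Measure H) := Integrable.of_eval fun i => i.1.integrable _
      simp only [hVl]
      rw [ContinuousLinearMap.integral_comp_comm l hint]
      congr 1
      funext i
      rw [eval_integral (fun i => hint.eval i)]
    have h5 : ENNReal.ofReal (l x0 - Q V) ≤ IR Q σ := by
      rw [← h4]
      exact le_iSup (fun V : H →ᵇ ℝ => ENNReal.ofReal ((∫ x, V x ∂(σ : Measure H)) - Q V)) V
    have := (ENNReal.ofReal_le_iff_le_toReal hσ).1 h5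
    linarith
  filter_upwards [lam_chain hs hD hηmeas hu₀ hindep hu hWc.measurable (NN_lip ht x0) hlam δ hδ] with k hk
  refine le_trans (ex_mono ?_) hk.1
  exact mul_le_mul_of_nonneg_left (by linarith) (Nat.cast_nonneg k)

end Core11

/-- **Theorem 1.2 / Theorem A**: under Conditions (A)–(D) with `b_j ≠ 0` for all `j`, for any
initial state `u₀` independent of the noise whose law is supported by the domain of
attainability `𝒜 = 𝒜({0})`, the occupation measures `ζ_k = k⁻¹ ∑_{n=0}^{k-1} δ_{u_n}` satisfy
the LDP with the good rate function `I(σ) = sup_V (⟨V,σ⟩ - Q(V))`, where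
`Q(V) = lim_k k⁻¹ log 𝔼 exp(∑_{n=1}^k V(u_n))` exists, does not depend on `u₀`
(the limit is the same for every deterministic initial point of `𝒜`), and is a `1`-Lipschitz
convex function with `Q(C) = C` on constants. -/
theorem statement0
    {H : Type} [NormedAddCommGroup H] [InnerProductSpace ℝ H] [CompleteSpace H]
    [SecondCountableTopology H] [MeasurableSpace H] [BorelSpace H]
    {Ω : Type} [MeasurableSpace Ω] (P : Measure Ω) [IsProbabilityMeasure P]
    (S : H → H) (e : HilbertBasis ℕ ℝ H)
    (η : ℕ → Ω → H) (hηmeas : ∀ k, Measurable (η k))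
    (b : ℕ → ℝ) (ξ : ℕ → ℕ → Ω → ℝ) (p : ℕ → ℝ → ℝ)
    (K : Set H) (hK : K = msupp (Measure.map (η 1) P)) (hKcomp : IsCompact K)
    (hA : CondA S) (hB : CondB S K) (hC : CondC S e) (hD : CondD P e η b ξ p)
    (hb : ∀ j, b j ≠ 0)
    (u₀ : Ω → H) (hu₀ : Measurable u₀)
    (hindep : IndepFun u₀ (fun ω (k : ℕ) => η k ω) P)
    (hsupp : Measure.map u₀ P (attainDom S K {0}) = 1) :
    ∃ Q : (H →ᵇ ℝ) → ℝ,
      -- existence of the limit `Q(V)` for the given chain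
      (∀ V : H →ᵇ ℝ,
        Tendsto (fun k : ℕ => (k : ℝ)⁻¹ *
            Real.log (∫ ω, Real.exp (∑ n ∈ Finset.Icc 1 k, V (traj S η u₀ n ω)) ∂P))
          atTop (𝓝 (Q V))) ∧
      -- the limit does not depend on the initial condition
      (∀ V : H →ᵇ ℝ, ∀ u ∈ attainDom S K ({0} : Set H),
        Tendsto (fun k : ℕ => (k : ℝ)⁻¹ *
            Real.log (∫ ω,
              Real.exp (∑ n ∈ Finset.Icc 1 k, V (traj S η (fun _ => u) n ω)) ∂P))
          atTop (𝓝 (Q V))) ∧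
      -- `Q` is convex and `1`-Lipschitz for the sup-norm over `𝒜`
      ConvexOn ℝ Set.univ Q ∧
      (∀ V₁ V₂ : H →ᵇ ℝ,
        |Q V₁ - Q V₂| ≤ ⨆ x : attainDom S K ({0} : Set H), |V₁ (x : H) - V₂ (x : H)|) ∧
      (∀ c : ℝ, Q (BoundedContinuousFunction.const H c) = c) ∧
      -- the LDP holds with the good rate function `I(σ) = sup_V (⟨V,σ⟩ - Q(V))`
      GoodRate (fun σ : ProbabilityMeasure H =>
        ⨆ V : H →ᵇ ℝ, ENNReal.ofReal ((∫ x, V x ∂(σ : Measure H)) - Q V)) ∧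
      LDPof (fun k F => P {ω | occ (fun n => traj S η u₀ n ω) k ∈ F})
        (fun σ : ProbabilityMeasure H =>
          ⨆ V : H →ᵇ ℝ, ENNReal.ofReal ((∫ x, V x ∂(σ : Measure H)) - Q V)) := by
  have hs := sys_of hηmeas hK hKcomp hA hB hC hD hb
  have := Measure.isProbabilityMeasure_map (μ := P) (hηmeas 1).aemeasurable
  have := Measure.isProbabilityMeasure_map (μ := P) hu₀.aemeasurable
  have hAm : MeasurableSet (attainDom S K {0}) := hs.comp.measurableSet
  have hu : ∀ᵐ ω ∂P, u₀ ω ∈ attainDom S K {0} := by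
    refine ae_of_ae_map (p := fun x => x ∈ attainDom S K {0}) hu₀.aemeasurable ?_
    exact (mem_ae_iff_prob_eq_one hAm).2 hsupp
  obtain ⟨Q, hQ⟩ := exists_Q hs
  have hQ' : ∀ v : Ω → H, Measurable v → IndepFun v (fun ω (k : ℕ) => η k ω) P →
      (∀ᵐ ω ∂P, v ω ∈ attainDom S K {0}) → ∀ V, IsQ P (traj S η v) V (Q V) := by
    intro v hv hi hm V
    exact isQ_of_lin hs hD hηmeas hv hi hm V.continuous.measurable
      (ContinuousLinearMap.id ℝ ℝ) (fun x => rfl) (hQ V)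
  have hQ0 := hQ' u₀ hu₀ hindep hu
  have hmeas := fun v hv => traj_meas (u₀ := v) hs.contS hηmeas hv
  have hmem := traj_mem hs hD hηmeas hu
  have hlip : ∀ V₁ V₂ : H →ᵇ ℝ,
      Q V₁ ≤ Q V₂ + ⨆ x : attainDom S K ({0} : Set H), |V₁ (x : H) - V₂ (x : H)| := by
    intro V₁ V₂
    refine IsQ_mono hmem (hQ0 V₁) (hQ0 V₂) fun x hx => ?_
    have hbdd : BddAbove (Set.range fun x : attainDom S K ({0} : Set H) => |V₁ (x : H) - V₂ (x : H)|) := by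
      refine ⟨dist V₁ V₂, ?_⟩
      rintro _ ⟨y, rfl⟩
      exact BoundedContinuousFunction.dist_coe_le_dist (f := V₁) (g := V₂) (y : H)
    have := (le_abs_self _).trans (le_ciSup hbdd ⟨x, hx⟩)
    simp only at this
    linarith
  refine ⟨Q, fun V => IsQ_tendsto (hmeas u₀ hu₀) (hQ0 V), ?_, ⟨convex_univ, ?_⟩, ?_, ?_, ?_, ?_, ?_⟩
  · intro V x hx
    exact IsQ_tendsto (hmeas _ measurable_const) (hQ' _ measurable_const (indepFun_const_left _ _)
      (Eventually.of_forall fun _ => hx) V)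
  · intro V _ V' _ a c ha hc hac
    exact IsQ_convex (hmeas u₀ hu₀) (hQ0 V) (hQ0 V') ha hc hac (hQ0 _)
  · intro V₁ V₂
    rw [abs_le]
    have h1 := hlip V₁ V₂
    have h2 := hlip V₂ V₁
    simp only [abs_sub_comm (V₂ _)] at h2
    constructor <;> linarith
  · intro c
    have h1 := IsQ_mono (d := 0) hmem (hQ0 (BoundedContinuousFunction.const H c)) (IsQ_const c) (by simp)
    have h2 := IsQ_mono (d := 0) hmem (IsQ_const c) (hQ0 (BoundedContinuousFunction.const H c)) (by simp)
    linarith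
  · exact IR_good hs.comp hs.ne hmem hQ0
  · intro F hF
    exact ldp_upper hs.comp (hmeas u₀ hu₀) hmem hQ0 hF
  · intro G hG
    exact ldp_lower (hmeas u₀ hu₀) (fun σ s hσ =>
      low_bound hs hD hηmeas hu₀ hindep hu hQ0 σ s hσ) hG
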